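/- Let d ≥ 1, a ≥ 0, r ≥ 2 and 2 < q < ∞ with 2/q + d/r = (d+a+1)/2. Then there exists a constant C = C(d,a,r) > 0 such that for every F ∈ 𝒮(ℝ^{d+1}_+×ℝ), the function W(X,t) := ∫_ℝ ∫_{ℝ^{d+1}_+} 𝕊_a(X,Y,t−τ) F(Y,τ) dω_a(Y) dτ (that is, W = 𝕋_a^*𝕋_a(F)) satisfies sup_{z>0} ‖W(·,z,·)‖_{L^q_tL^r_x} ≤ C · ∫₀^∞ ‖F(·,ζ,·)‖_{L^{q'}_tL^{r'}_x} ζ^a dζ. -/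

import Mathlib

open MeasureTheory Filter Complex
open scoped ENNReal NNReal Topology

noncomputable section

/-- Bessel function of the first kind of order `ν`, via its power series. -/
def besselJ (ν : ℝ) (x : ℝ) : ℝ :=
  ∑' k : ℕ, ((-1 : ℝ) ^ k / ((k.factorial : ℝ) * Real.Gamma ((k : ℝ) + ν + 1))) *
    (x / 2) ^ (2 * (k : ℝ) + ν)

/-- The half-line Schrödinger–Bessel kernel `S_a(z,ζ,t)`. -/
def SaK (a : ℝ) (z ζ t : ℝ) : ℂ :=
  (Complex.exp (-Complex.I * ((Real.sign t : ℝ) : ℂ) * (((a + 1) * Real.pi / 4 : ℝ) : ℂ)) /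
      (((2 * |t|) ^ ((a + 1) / 2) : ℝ) : ℂ)) *
    (((z * ζ / (2 * |t|)) ^ ((1 - a) / 2) : ℝ) : ℂ) *
    ((besselJ ((a - 1) / 2) (z * ζ / (2 * |t|)) : ℝ) : ℂ) *
    Complex.exp (Complex.I * ((z ^ 2 + ζ ^ 2 : ℝ) : ℂ) / ((4 * t : ℝ) : ℂ))

/-- The boundary kernel `S_a(z,0,t)`. -/
def Sa0 (a : ℝ) (z t : ℝ) : ℂ :=
  ((((2 : ℝ) ^ (-a) / Real.Gamma ((a + 1) / 2) : ℝ)) : ℂ) *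
    Complex.exp (-Complex.I * ((Real.sign t : ℝ) : ℂ) * (((a + 1) * Real.pi / 4 : ℝ) : ℂ)) *
    (((|t| ^ (-((a + 1) / 2)) : ℝ)) : ℂ) *
    Complex.exp (Complex.I * ((z ^ 2 : ℝ) : ℂ) / ((4 * t : ℝ) : ℂ))

/-- The free Schrödinger kernel on `ℝ^d` (principal branch of the power). -/
def Sfree (d : ℕ) (x y : Fin d → ℝ) (t : ℝ) : ℂ :=
  (4 * (Real.pi : ℂ) * Complex.I * (t : ℂ)) ^ (-(d : ℂ) / 2) *
    Complex.exp (Complex.I * ((∑ i, (x i - y i) ^ 2 : ℝ) : ℂ) / ((4 * t : ℝ) : ℂ))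

/-- The full half-space kernel `𝕊_a(X,Y,t) = S_a(z,ζ,t)·S(x,y,t)`. -/
def SK (d : ℕ) (a : ℝ) (X Y : (Fin d → ℝ) × ℝ) (t : ℝ) : ℂ :=
  SaK a X.2 Y.2 t * Sfree d X.1 Y.1 t

/-- The weighted measure `dω_a = z^a dx dz` on the half-space `ℝ^d × (0,∞)`. -/
def ωa (d : ℕ) (a : ℝ) : Measure ((Fin d → ℝ) × ℝ) :=
  (volume : Measure (Fin d → ℝ)).prod
    (((volume : Measure ℝ).restrict (Set.Ioi 0)).withDensity fun z => ENNReal.ofReal (z ^ a))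

/-- The mixed norm `‖Φ‖_{L^q_t L^r_x}`. -/
def mixNorm (d : ℕ) (q r : ℝ) (Φ : (Fin d → ℝ) → ℝ → ℂ) : ℝ≥0∞ :=
  (∫⁻ t : ℝ, (∫⁻ x : Fin d → ℝ, (‖Φ x t‖₊ : ℝ≥0∞) ^ r) ^ (q / r)) ^ (1 / q)

/-- The mixed norm `‖Φ‖_{L^q_T L^r_x}` over the time interval `[0,T]`. -/
def mixNormT (d : ℕ) (T q r : ℝ) (Φ : (Fin d → ℝ) → ℝ → ℂ) : ℝ≥0∞ :=
  (∫⁻ t in Set.Ioc (0 : ℝ) T, (∫⁻ x : Fin d → ℝ, (‖Φ x t‖₊ : ℝ≥0∞) ^ r) ^ (q / r)) ^ (1 / q)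

/-- The homogeneous propagator `𝕋_a^*(u₀)`. -/
def Tstar (d : ℕ) (a : ℝ) (u₀ : (Fin d → ℝ) × ℝ → ℂ) (X : (Fin d → ℝ) × ℝ) (t : ℝ) : ℂ :=
  if t = 0 then u₀ X else ∫ Y, SK d a X Y t * u₀ Y ∂(ωa d a)

/-- The inhomogeneous Duhamel term `𝔻_a(F)`. -/
def Dop (d : ℕ) (a : ℝ) (F : (Fin d → ℝ) × ℝ → ℝ → ℂ) (X : (Fin d → ℝ) × ℝ) (t : ℝ) : ℂ :=
  ∫ τ in (0 : ℝ)..t, ∫ Y, SK d a X Y (t - τ) * F Y τ ∂(ωa d a)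

/-- The boundary-data operator `Θ_a^*(Φ)`. -/
def ThetaStar (d : ℕ) (a : ℝ) (Φ : (Fin d → ℝ) → ℝ → ℂ) (X : (Fin d → ℝ) × ℝ) (t : ℝ) : ℂ :=
  Complex.I *
    ∫ τ in (0 : ℝ)..t, ∫ y : Fin d → ℝ, Sa0 a X.2 (t - τ) * Sfree d X.1 y (t - τ) * Φ y τ

/-- The weight `k(z) = min{1, z^{a/2}}`. -/
def kwt (a z : ℝ) : ℝ := min 1 (z ^ (a / 2))

/-- The weight `k^{-1}(z) = max{1, z^{-a/2}}`. -/
def kinv (a z : ℝ) : ℝ := max 1 (z ^ (-a / 2))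


open FourierTransform SchwartzMap in
theorem plancherel_aux {d : ℕ} (f : EuclideanSpace ℝ (Fin d) → ℂ) (h1 : Integrable f)
    (h2 : MemLp f 2) : eLpNorm (𝓕 f) 2 volume = eLpNorm f 2 volume := by
  let g : Lp (α := EuclideanSpace ℝ (Fin d)) ℂ 2 := h2.toLp f
  have hc : Continuous (𝓕 f) := by
    exact VectorFourier.fourierIntegral_continuous Real.continuous_fourierChar
      (by exact continuous_inner) h1
  let G : Lp (α := EuclideanSpace ℝ (Fin d)) ℂ 2 := 𝓕 g
  have key : ∀ᵐ x, (𝓕 f) x = G x := by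
    apply ae_eq_of_integral_contDiff_smul_eq
    · exact hc.locallyIntegrable
    · exact (Lp.memLp _).locallyIntegrable (by norm_num)
    · intro φ hφ hφc
      have hφ' : HasCompactSupport (fun x => (φ x : ℂ)) := hφc.comp_left (g := fun x : ℝ => (x:ℂ)) (by simp)
      let Φ : 𝓢(EuclideanSpace ℝ (Fin d), ℂ) := hφ'.toSchwartzMap (Complex.ofRealCLM.contDiff.comp hφ)
      have hΦ : ∀ x, Φ x = φ x := fun x => rfl
      have e1 := congrArg (fun T => T Φ) (Lp.fourier_toTemperedDistribution_eq g)
      simp only [TemperedDistribution.fourier_apply, Lp.toTemperedDistribution_apply] at e1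
      have e2 : ∫ x, (𝓕 Φ) x • g x = ∫ x, (𝓕 Φ) x • f x := by
        apply integral_congr_ae
        filter_upwards [h2.coeFn_toLp] with x hx
        rw [show g x = f x from hx]
      have e3 := VectorFourier.integral_fourierIntegral_smul_eq_flip (𝕜 := ℝ) (μ := volume) (ν := volume)
        (L := innerₗ (EuclideanSpace ℝ (Fin d))) (e := Real.fourierChar) Real.continuous_fourierChar continuous_inner
        (f := fun x => Φ x) (g := f) Φ.integrable h1
      have e4 : ∫ x, (𝓕 Φ) x • f x = ∫ x, Φ x • (𝓕 f) x := by
        rw [flip_innerₗ] at e3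
        exact e3
      rw [e2, e4] at e1
      simpa [hΦ, G] using e1
  rw [eLpNorm_congr_ae key]
  have := Lp.norm_fourier_eq g
  rw [Lp.norm_def, Lp.norm_def, ENNReal.toReal_eq_toReal_iff' (Lp.eLpNorm_ne_top _) (Lp.eLpNorm_ne_top _)] at this
  change eLpNorm G 2 volume = _ at this
  rw [this]
  exact eLpNorm_congr_ae h2.coeFn_toLp


theorem sfree_norm (d : ℕ) (x y : Fin d → ℝ) {t : ℝ} (ht : t ≠ 0) :
    ‖Sfree d x y t‖ = (4 * Real.pi * |t|) ^ (-(d : ℝ) / 2) := by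
  unfold Sfree
  have h0 : (4 * (Real.pi : ℂ) * Complex.I * (t : ℂ)) ≠ 0 := by
    simp [ht, Real.pi_ne_zero]
  have e1 : ‖Complex.exp (Complex.I * ((∑ i, (x i - y i) ^ 2 : ℝ) : ℂ) / ((4 * t : ℝ) : ℂ))‖ = 1 := by
    rw [show Complex.I * ((∑ i, (x i - y i) ^ 2 : ℝ) : ℂ) / ((4 * t : ℝ) : ℂ)
      = (((∑ i, (x i - y i) ^ 2) / (4 * t) : ℝ) : ℂ) * Complex.I by push_cast; ring]
    exact Complex.norm_exp_ofReal_mul_I _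
  have e2 : (-(d : ℂ) / 2) = ((-(d : ℝ) / 2 : ℝ) : ℂ) := by push_cast; ring
  rw [norm_mul, e1, mul_one, Complex.norm_cpow_of_ne_zero h0, e2, Complex.ofReal_re, Complex.ofReal_im]
  simp [abs_of_pos Real.pi_pos]

theorem measurable_sfree (d : ℕ) :
    Measurable (fun p : (Fin d → ℝ) × (Fin d → ℝ) × ℝ => Sfree d p.1 p.2.1 p.2.2) := by
  unfold Sfree
  fun_prop

open FourierTransform in
theorem sfree_L2 (d : ℕ) {t : ℝ} (ht : t ≠ 0) (f : (Fin d → ℝ) → ℂ) (h1 : Integrable f)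
    (h2 : MemLp f 2) :
    ∫⁻ x, ‖∫ y, Sfree d x y t * f y‖ₑ ^ (2 : ℝ) = ∫⁻ x, ‖f x‖ₑ ^ (2 : ℝ) := by
  let E := EuclideanSpace ℝ (Fin d)
  let h : E → ℂ := fun y =>
    Complex.exp (((((∑ i, (y i) ^ 2) / (4 * t) : ℝ)) : ℂ) * Complex.I) * f (WithLp.ofLp y)
  have hmp := PiLp.volume_preserving_ofLp (Fin d)
  have hmp' := PiLp.volume_preserving_toLp (Fin d)
  have hemb : MeasurableEmbedding (@WithLp.ofLp 2 (Fin d → ℝ)) :=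
    (MeasurableEquiv.toLp 2 (Fin d → ℝ)).symm.measurableEmbedding
  have hemb' : MeasurableEmbedding (@WithLp.toLp 2 (Fin d → ℝ)) :=
    (MeasurableEquiv.toLp 2 (Fin d → ℝ)).measurableEmbedding
  have hg1 : Integrable (fun y : E => f (WithLp.ofLp y)) := hmp.integrable_comp_of_integrable h1
  have hg2 : MemLp (fun y : E => f (WithLp.ofLp y)) 2 := h2.comp_measurePreserving hmp
  have hcm : Measurable (fun y : EuclideanSpace ℝ (Fin d) => Complex.exp (((((∑ i, (y i) ^ 2) / (4 * t) : ℝ)) : ℂ) * Complex.I)) := by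
    fun_prop
  have hhm : AEStronglyMeasurable h volume := hcm.aestronglyMeasurable.mul hg1.1
  have hnorm : ∀ y, ‖h y‖ = ‖f (WithLp.ofLp y)‖ := by
    intro y
    simp only [h]
    rw [norm_mul, Complex.norm_exp_ofReal_mul_I, one_mul]
  have hh1 : Integrable h := hg1.congr' hhm (by filter_upwards with y using (hnorm y).symm)
  have hh2 : MemLp h 2 := hg2.of_le hhm (by filter_upwards with y using (hnorm y).le)
  have P := plancherel_aux h hh1 hh2
  have P' : ∫⁻ x, ‖𝓕 h x‖ₑ ^ (2 : ℝ) = ∫⁻ x, ‖f x‖ₑ ^ (2 : ℝ) := by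
    rw [eLpNorm_eq_lintegral_rpow_enorm_toReal (by norm_num) (by norm_num),
      eLpNorm_eq_lintegral_rpow_enorm_toReal (by norm_num) (by norm_num)] at P
    have P2 := ENNReal.rpow_left_injective (x := 1 / (2:ℝ≥0∞).toReal) (by norm_num) P
    simp only [ENNReal.toReal_ofNat] at P2
    refine P2.trans (Eq.trans ?_ (hmp.lintegral_comp_emb hemb (fun x => ‖f x‖ₑ ^ (2 : ℝ))))
    apply lintegral_congr
    intro y
    rw [← ofReal_norm, hnorm, ofReal_norm]
  have hc : Continuous (𝓕 h) :=
    VectorFourier.fourierIntegral_continuous Real.continuous_fourierChar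
      (by exact continuous_inner) hh1
  -- pointwise identity
  have key : ∀ x : Fin d → ℝ, ‖∫ y, Sfree d x y t * f y‖
      = (4 * Real.pi * |t|) ^ (-(d : ℝ) / 2) * ‖𝓕 h (WithLp.toLp 2 ((4 * Real.pi * t)⁻¹ • x))‖ := by
    intro x
    rw [Real.fourier_eq', ← hmp'.integral_comp hemb', ]
    have : ∀ y : Fin d → ℝ, Sfree d x y t * f y = Sfree d x 0 t *
       (Complex.exp ((↑(-2 * Real.pi * inner ℝ (WithLp.toLp 2 y : E) (WithLp.toLp 2 ((4 * Real.pi * t)⁻¹ • x) : E)) * Complex.I)) • h (WithLp.toLp 2 y)) := by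
      intro y
      simp only [Sfree, h, smul_eq_mul]
      generalize (4 * (Real.pi : ℂ) * I * (t : ℂ)) ^ (-(d : ℂ) / 2) = K
      have reo : ∀ A B D E' : ℂ, K * A * (B * (D * E')) = K * (A * B * D) * E' := by intros; ring
      rw [reo, ← Complex.exp_add, ← Complex.exp_add]
      congr 3
      have : inner ℝ (WithLp.toLp 2 y : E) (WithLp.toLp 2 ((4 * Real.pi * t)⁻¹ • x) : E)
        = (4 * Real.pi * t)⁻¹ * ∑ i, x i * y i := by
        simp [PiLp.inner_apply, Finset.mul_sum, mul_assoc]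
      rw [this]
      have e : (∑ i, (x i - y i) ^ 2) = ∑ i, (x i) ^ 2 - 2 * ∑ i, x i * y i + ∑ i, (y i)^2 := by
        rw [Finset.mul_sum, ← Finset.sum_sub_distrib, ← Finset.sum_add_distrib]
        congr 1; ext i; ring
      rw [e]
      have hpi : (Real.pi : ℂ) ≠ 0 := by exact_mod_cast Real.pi_ne_zero
      have ht' : (t : ℂ) ≠ 0 := by exact_mod_cast ht
      simp only [Pi.zero_apply, sub_zero]
      push_cast
      field_simp
      ring
    rw [integral_congr_ae (Eventually.of_forall this), integral_const_mul, norm_mul, sfree_norm d x 0 ht]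
  have hsc : (4 * Real.pi * t)⁻¹ ≠ 0 := by simp [ht, Real.pi_ne_zero]
  have hpos : 0 < 4 * Real.pi * |t| := by have := abs_pos.mpr ht; positivity
  let c : ℝ≥0∞ := ENNReal.ofReal ((4 * Real.pi * |t|) ^ (-(d : ℝ)))
  calc ∫⁻ x, ‖∫ y, Sfree d x y t * f y‖ₑ ^ (2 : ℝ)
      = ∫⁻ x : Fin d → ℝ, c * ‖𝓕 h (WithLp.toLp 2 ((4 * Real.pi * t)⁻¹ • x))‖ₑ ^ (2:ℝ) := by
        apply lintegral_congr
        intro x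
        rw [← ofReal_norm, key x, ENNReal.ofReal_mul (by positivity), ENNReal.mul_rpow_of_nonneg _ _ (by norm_num),
          ofReal_norm]
        congr 1
        rw [ENNReal.ofReal_rpow_of_nonneg (by positivity) (by norm_num), ← Real.rpow_mul hpos.le]
        simp [c]
    _ = c * ∫⁻ x : Fin d → ℝ, ‖𝓕 h (WithLp.toLp 2 ((4 * Real.pi * t)⁻¹ • x))‖ₑ ^ (2:ℝ) := by
        rw [lintegral_const_mul']
        exact ENNReal.ofReal_ne_top
    _ = c * ∫⁻ x, ‖𝓕 h (WithLp.toLp 2 x)‖ₑ ^ (2:ℝ) ∂(Measure.map ((4 * Real.pi * t)⁻¹ • ·) (volume : Measure (Fin d → ℝ))) := by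
        congr 1
        exact ((Homeomorph.smulOfNeZero (α := Fin d → ℝ) _ hsc).measurableEmbedding.lintegral_map
          (μ := volume) (fun x => ‖𝓕 h (WithLp.toLp 2 x)‖ₑ ^ (2:ℝ))).symm
    _ = c * (ENNReal.ofReal ((4 * Real.pi * |t|) ^ (d : ℝ)) * ∫⁻ x, ‖𝓕 h (WithLp.toLp 2 x)‖ₑ ^ (2:ℝ)) := by
        rw [Measure.map_addHaar_smul _ hsc, lintegral_smul_measure]
        congr 2
        simp [abs_mul, abs_of_pos Real.pi_pos]
        rw [← inv_pow]
        congr 2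
        have := abs_pos.mpr ht
        field_simp
    _ = ∫⁻ x, ‖𝓕 h (WithLp.toLp 2 x)‖ₑ ^ (2:ℝ) := by
        rw [← mul_assoc, ← ENNReal.ofReal_mul (by positivity), ← Real.rpow_add hpos]
        simp
    _ = _ := by
        rw [hmp'.lintegral_comp_emb hemb' (fun x => ‖𝓕 h x‖ₑ ^ (2:ℝ)), P']


theorem lint_rpow_Ioc {s M : ℝ} (hs : -1 < s) (hM : 0 ≤ M) :
    ∫⁻ u in Set.Ioc 0 M, ENNReal.ofReal (u ^ s) = ENNReal.ofReal (M ^ (s + 1) / (s + 1)) := by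
  rw [← ofReal_integral_eq_lintegral_ofReal]
  · congr 1
    rw [← intervalIntegral.integral_of_le hM, integral_rpow (Or.inl hs),
      Real.zero_rpow (by linarith), sub_zero]
  · exact (intervalIntegrable_iff_integrableOn_Ioc_of_le hM).mp (intervalIntegral.intervalIntegrable_rpow' hs)
  · filter_upwards [self_mem_ae_restrict measurableSet_Ioc] with u hu
    exact Real.rpow_nonneg hu.1.le _

theorem interp_aux {X : Type*} [MeasurableSpace X] (μ : Measure X) [SigmaFinite μ]
    (k : X → X → ℂ) (hkm : Measurable (Function.uncurry k)) {A : ℝ} (hA : 0 < A)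
    (hk : ∀ x y, ‖k x y‖ ≤ A)
    (hL2 : ∀ f : X → ℂ, Integrable f μ → MemLp f 2 μ →
      ∫⁻ x, ‖∫ y, k x y * f y ∂μ‖ₑ ^ (2 : ℝ) ∂μ ≤ ∫⁻ x, ‖f x‖ₑ ^ (2 : ℝ) ∂μ)
    {r : ℝ} (hr : 2 < r) (f : X → ℂ) (hfm : Measurable f) (h1 : Integrable f μ) (h2 : MemLp f 2 μ) :
    ∫⁻ x, ‖∫ y, k x y * f y ∂μ‖ₑ ^ r ∂μ ≤
      ENNReal.ofReal (4 * r / (r - 2) * (2 * A) ^ (r - 2)) *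
        (∫⁻ x, ‖f x‖ₑ ^ (r / (r - 1)) ∂μ) ^ (r - 1) := by
  set p := r / (r - 1) with hp
  have hr1 : 0 < r - 1 := by linarith
  have hr2 : 0 < r - 2 := by linarith
  have hp0 : 0 < p := by positivity
  have hp1 : 1 < p := by rw [hp, lt_div_iff₀ hr1]; linarith
  set N := ∫⁻ x, ‖f x‖ₑ ^ p ∂μ with hN
  have hTm : ∀ g : X → ℂ, Measurable g → Measurable (fun x => ∫ y, k x y * g y ∂μ) := by
    intro g hg
    have : Measurable (fun q : X × X => k q.1 q.2 * g q.2) := hkm.mul (hg.comp measurable_snd)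
    exact this.stronglyMeasurable.integral_prod_right.measurable
  rcases eq_or_ne N ⊤ with hNt | hNt
  · rw [hNt, ENNReal.top_rpow_of_pos hr1, ENNReal.mul_top]
    · exact le_top
    · rw [Ne, ENNReal.ofReal_eq_zero, not_le]; positivity
  rcases eq_or_ne N 0 with hN0 | hN0
  · have hf0 : ∀ᵐ x ∂μ, f x = 0 := by
      rw [hN, lintegral_eq_zero_iff (by fun_prop)] at hN0
      filter_upwards [hN0] with x hx
      simpa [hp0, hp0.le, not_lt.mpr hp0.le] using hx
    have : ∀ x, ∫ y, k x y * f y ∂μ = 0 := by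
      intro x
      apply integral_eq_zero_of_ae
      filter_upwards [hf0] with y hy
      simp [hy]
    simp [this, show 0 < r by linarith]
  obtain ⟨n, hn, hnN⟩ : ∃ n : ℝ, 0 < n ∧ N = ENNReal.ofReal n :=
    ⟨N.toReal, ENNReal.toReal_pos hN0 hNt, (ENNReal.ofReal_toReal hNt).symm⟩
  let M : X → ℝ := fun x => 2 * A * n * ‖f x‖ ^ (1 - p)
  have hMm : Measurable M := by fun_prop
  have hM0 : ∀ x, 0 ≤ M x := fun x => by positivity
  have hweak : ∀ α : ℝ, 0 < α → μ {x | α < ‖∫ y, k x y * f y ∂μ‖} ≤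
      ENNReal.ofReal (4 * α ^ (-2 : ℝ)) * ∫⁻ x, {x | α ≤ M x}.indicator (fun x => ‖f x‖ₑ ^ (2:ℝ)) x ∂μ := by
    intro α hα
    have hS : MeasurableSet {x | α ≤ M x} := measurableSet_le measurable_const hMm
    let f2 := {x | α ≤ M x}.indicator f
    let f1 := {x | α ≤ M x}ᶜ.indicator f
    have hf2 : Integrable f2 μ := h1.indicator hS
    have hf1 : Integrable f1 μ := h1.indicator hS.compl
    have hkint : ∀ g, Integrable g μ → ∀ x, Integrable (fun y => k x y * g y) μ := by
      intro g hg x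
      exact hg.bdd_mul (c := A) (hkm.comp measurable_prodMk_left).aestronglyMeasurable (ae_of_all _ (hk x))
    have hf1n : ∫ y, ‖f1 y‖ ∂μ ≤ α / (2 * A) := by
      rw [integral_norm_eq_lintegral_enorm hf1.1]
      apply ENNReal.toReal_le_of_le_ofReal (by positivity)
      calc ∫⁻ y, ‖f1 y‖ₑ ∂μ ≤ ∫⁻ y, ENNReal.ofReal (α / (2 * A * n)) * ‖f y‖ₑ ^ p ∂μ := by
            apply lintegral_mono
            intro y
            by_cases hy : α ≤ M y
            · simp [f1, hy]
            · simp only [f1]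
              rw [Set.indicator_of_mem (by exact hy)]
              by_cases h0 : f y = 0
              · simp [h0]
              push Not at hy
              have hpos : 0 < ‖f y‖ := norm_pos_iff.mpr h0
              rw [← ofReal_norm, ENNReal.ofReal_rpow_of_nonneg hpos.le hp0.le,
                ← ENNReal.ofReal_mul (by positivity)]
              apply ENNReal.ofReal_le_ofReal
              have e : ‖f y‖ = ‖f y‖ ^ (1 - p) * ‖f y‖ ^ p := by
                rw [← Real.rpow_add hpos]; simp
              have : ‖f y‖ ^ (1 - p) ≤ α / (2 * A * n) := by
                rw [le_div_iff₀ (by positivity)]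
                simp only [M] at hy
                linarith
              calc ‖f y‖ = ‖f y‖ ^ (1 - p) * ‖f y‖ ^ p := e
                _ ≤ _ := by gcongr
        _ = ENNReal.ofReal (α / (2 * A * n)) * N := by rw [lintegral_const_mul' _ _ ENNReal.ofReal_ne_top]
        _ = ENNReal.ofReal (α / (2 * A)) := by
            rw [hnN, ← ENNReal.ofReal_mul (by positivity)]
            congr 1; field_simp
    have hT1 : ∀ x, ‖∫ y, k x y * f1 y ∂μ‖ ≤ α / 2 := by
      intro x
      calc ‖∫ y, k x y * f1 y ∂μ‖ ≤ ∫ y, A * ‖f1 y‖ ∂μ := by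
            apply norm_integral_le_of_norm_le (hf1.norm.const_mul A)
            filter_upwards with y
            rw [norm_mul]
            gcongr
            exact hk x y
        _ ≤ A * (α / (2 * A)) := by rw [integral_const_mul]; gcongr
        _ = α / 2 := by field_simp
    have hsub : {x | α < ‖∫ y, k x y * f y ∂μ‖} ⊆
        {x | ENNReal.ofReal ((α/2) ^ (2:ℝ)) ≤ ‖∫ y, k x y * f2 y ∂μ‖ₑ ^ (2:ℝ)} := by
      intro x hx
      simp only [Set.mem_ofPred_eq] at hx ⊢
      have e : ∫ y, k x y * f y ∂μ = (∫ y, k x y * f2 y ∂μ) + ∫ y, k x y * f1 y ∂μ := by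
        rw [← integral_add (hkint _ hf2 x) (hkint _ hf1 x)]
        congr 1; ext y
        rw [← mul_add]
        congr 1
        exact (Set.indicator_self_add_compl_apply _ _ _).symm
      have := norm_add_le (∫ y, k x y * f2 y ∂μ) (∫ y, k x y * f1 y ∂μ)
      rw [← e] at this
      have h3 := hT1 x
      rw [← ofReal_norm, ENNReal.ofReal_rpow_of_nonneg (norm_nonneg _) (by norm_num)]
      apply ENNReal.ofReal_le_ofReal
      gcongr
      linarith
    have hc0 : ENNReal.ofReal ((α/2) ^ (2:ℝ)) ≠ 0 := by
      rw [Ne, ENNReal.ofReal_eq_zero, not_le]; positivity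
    calc μ {x | α < ‖∫ y, k x y * f y ∂μ‖} ≤ μ _ := measure_mono hsub
      _ ≤ (∫⁻ x, ‖∫ y, k x y * f2 y ∂μ‖ₑ ^ (2:ℝ) ∂μ) / ENNReal.ofReal ((α/2) ^ (2:ℝ)) :=
          meas_ge_le_lintegral_div (((hTm _ (hfm.indicator hS)).enorm.pow_const _).aemeasurable) hc0 ENNReal.ofReal_ne_top
      _ ≤ (∫⁻ x, ‖f2 x‖ₑ ^ (2:ℝ) ∂μ) / ENNReal.ofReal ((α/2) ^ (2:ℝ)) := by
          exact ENNReal.div_le_div_right (hL2 _ hf2 (h2.indicator hS)) _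
      _ = _ := by
          rw [ENNReal.div_eq_inv_mul, ← ENNReal.ofReal_inv_of_pos (by positivity)]
          congr 1
          · congr 1
            rw [Real.rpow_neg hα.le, Real.div_rpow hα.le (by norm_num)]
            norm_num
            field_simp
          · apply lintegral_congr
            intro x
            by_cases hx : α ≤ M x <;> simp [f2, hx]
  have hr0 : 0 < r := by linarith
  have hlay := lintegral_rpow_eq_lintegral_meas_lt_mul μ (f := fun x => ‖∫ y, k x y * f y ∂μ‖)
    (ae_of_all _ fun x => norm_nonneg _) (hTm f hfm).norm.aemeasurable hr0
  have hlay' : ∫⁻ x, ‖∫ y, k x y * f y ∂μ‖ₑ ^ r ∂μ = ∫⁻ x, ENNReal.ofReal (‖∫ y, k x y * f y ∂μ‖ ^ r) ∂μ := by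
    apply lintegral_congr
    intro x
    rw [← ofReal_norm, ENNReal.ofReal_rpow_of_nonneg (norm_nonneg _) hr0.le]
  rw [hlay', hlay]
  have hjm : Measurable (fun q : ℝ × X => ENNReal.ofReal (4 * q.1 ^ (r - 3)) *
      {x | q.1 ≤ M x}.indicator (fun x => ‖f x‖ₑ ^ (2:ℝ)) q.2) := by
    apply Measurable.mul (by fun_prop)
    have : (fun q : ℝ × X => {x | q.1 ≤ M x}.indicator (fun x => ‖f x‖ₑ ^ (2:ℝ)) q.2)
      = {q : ℝ × X | q.1 ≤ M q.2}.indicator (fun q => ‖f q.2‖ₑ ^ (2:ℝ)) := by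
      ext q; simp [Set.indicator]
    rw [this]
    exact Measurable.indicator (by fun_prop) (measurableSet_le measurable_fst (hMm.comp measurable_snd))
  calc ENNReal.ofReal r * ∫⁻ t in Set.Ioi 0, μ {a | t < ‖∫ y, k a y * f y ∂μ‖} * ENNReal.ofReal (t ^ (r - 1))
      ≤ ENNReal.ofReal r * ∫⁻ t in Set.Ioi (0:ℝ), ∫⁻ x, ENNReal.ofReal (4 * t ^ (r - 3)) *
          {x | t ≤ M x}.indicator (fun x => ‖f x‖ₑ ^ (2:ℝ)) x ∂μ := by
        refine mul_le_mul_right ?_ _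
        apply setLIntegral_mono' measurableSet_Ioi
        intro t ht
        have ht : 0 < t := ht
        rw [lintegral_const_mul' _ _ ENNReal.ofReal_ne_top]
        calc _ ≤ _ := mul_le_mul_left (hweak t ht) _
          _ = _ := by
            rw [mul_right_comm, ← ENNReal.ofReal_mul (by positivity), mul_assoc 4, ← Real.rpow_add ht]
            congr 4
            ring
    _ = ENNReal.ofReal r * ∫⁻ x, (∫⁻ t in Set.Ioi (0:ℝ), ENNReal.ofReal (4 * t ^ (r - 3)) *
          {x | t ≤ M x}.indicator (fun x => ‖f x‖ₑ ^ (2:ℝ)) x) ∂μ := by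
        rw [lintegral_lintegral_swap hjm.aemeasurable]
    _ ≤ ENNReal.ofReal r * ∫⁻ x, ENNReal.ofReal (4 / (r - 2) * (2 * A * n) ^ (r - 2)) * ‖f x‖ₑ ^ p ∂μ := by
        refine mul_le_mul_right ?_ _
        apply lintegral_mono
        intro x
        have e1 : ∀ t ∈ Set.Ioi (0:ℝ), ENNReal.ofReal (4 * t ^ (r - 3)) * {x | t ≤ M x}.indicator (fun x => ‖f x‖ₑ ^ (2:ℝ)) x
          = (Set.Iic (M x)).indicator (fun t => (4 * ‖f x‖ₑ ^ (2:ℝ)) * ENNReal.ofReal (t ^ (r - 3))) t := by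
          intro t ht
          by_cases h : t ≤ M x
          · simp [h, ENNReal.ofReal_mul]; ring
          · simp [h]
        simp only
        rw [setLIntegral_congr_fun measurableSet_Ioi e1, lintegral_indicator measurableSet_Iic,
          Measure.restrict_restrict measurableSet_Iic, Set.inter_comm, Set.Ioi_inter_Iic,
          lintegral_const_mul _ (by fun_prop), lint_rpow_Ioc (by linarith) (hM0 x)]
        by_cases h0 : f x = 0
        · simp [h0]
        have hpos : 0 < ‖f x‖ := norm_pos_iff.mpr h0
        rw [show (4 : ℝ≥0∞) = ENNReal.ofReal 4 by simp, ← ofReal_norm, ENNReal.ofReal_rpow_of_nonneg hpos.le hp0.le,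
          ENNReal.ofReal_rpow_of_nonneg hpos.le (by norm_num), ← ENNReal.ofReal_mul (by positivity),
          ← ENNReal.ofReal_mul (by positivity), ← ENNReal.ofReal_mul (by positivity)]
        apply ENNReal.ofReal_le_ofReal
        apply le_of_eq
        simp only [M]
        rw [show r - 3 + 1 = r - 2 by ring, Real.mul_rpow (by positivity) (by positivity), ← Real.rpow_mul hpos.le]
        have e2 : ‖f x‖ ^ p = ‖f x‖ ^ (2:ℝ) * ‖f x‖ ^ ((1 - p) * (r - 2)) := by
          rw [← Real.rpow_add hpos]
          congr 1
          rw [hp]; field_simp; ring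
        rw [e2]
        ring
    _ = _ := by
        rw [lintegral_const_mul' _ _ ENNReal.ofReal_ne_top, ← hN, hnN, ENNReal.ofReal_rpow_of_nonneg hn.le hr1.le,
          ← ENNReal.ofReal_mul (by positivity), ← ENNReal.ofReal_mul (by positivity), ← ENNReal.ofReal_mul (by positivity)]
        congr 1
        rw [Real.mul_rpow (by positivity) hn.le, show r - 1 = (r - 2) + 1 by ring, Real.rpow_add_one hn.ne']
        ring


theorem sfree_Lr (d : ℕ) {r : ℝ} (hr : 2 ≤ r) : ∃ C : ℝ, 0 < C ∧ ∀ t : ℝ, t ≠ 0 →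
    ∀ f : (Fin d → ℝ) → ℂ, Measurable f → Integrable f → MemLp f 2 →
    (∫⁻ x, ‖∫ y, Sfree d x y t * f y‖ₑ ^ r) ^ (1 / r) ≤
      ENNReal.ofReal (C * |t| ^ (-((d : ℝ) * (1 / 2 - 1 / r)))) *
        (∫⁻ x, ‖f x‖ₑ ^ (r / (r - 1))) ^ (1 / (r / (r - 1))) := by
  rcases eq_or_lt_of_le hr with h | h
  · subst h
    refine ⟨1, one_pos, fun t ht f hfm h1 h2 => ?_⟩
    rw [sfree_L2 d ht f h1 h2]
    norm_num
  · have hr1 : 0 < r - 1 := by linarith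
    have hr2 : 0 < r - 2 := by linarith
    have hr0 : 0 < r := by linarith
    refine ⟨(4 * r / (r - 2)) ^ (1 / r) * (2 ^ (r - 2)) ^ (1 / r) * (4 * Real.pi) ^ (-((d : ℝ) * (1 / 2 - 1 / r))),
      by positivity, fun t ht f hfm h1 h2 => ?_⟩
    have ht' : 0 < |t| := abs_pos.mpr ht
    have hkm : Measurable (Function.uncurry fun x y => Sfree d x y t) :=
      (measurable_sfree d).comp (f := fun p : (Fin d → ℝ) × (Fin d → ℝ) => (p.1, p.2, t)) (by fun_prop)
    have hA : 0 < (4 * Real.pi * |t|) ^ (-(d : ℝ) / 2) := by positivity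
    have := interp_aux volume (fun x y => Sfree d x y t) hkm hA
      (fun x y => (sfree_norm d x y ht).le) (fun f h1 h2 => (sfree_L2 d ht f h1 h2).le) h f hfm h1 h2
    have h3 := ENNReal.rpow_le_rpow this (z := 1 / r) (by positivity)
    refine h3.trans (le_of_eq ?_)
    rw [ENNReal.mul_rpow_of_nonneg _ _ (by positivity), ← ENNReal.rpow_mul,
      ENNReal.ofReal_rpow_of_nonneg (by positivity) (by positivity)]
    congr 2
    · have e1 : (4 * Real.pi) ^ (-((d : ℝ) * (1 / 2 - 1 / r))) * |t| ^ (-((d : ℝ) * (1 / 2 - 1 / r)))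
          = (((4 * Real.pi * |t|) ^ (-(d : ℝ) / 2)) ^ (r - 2)) ^ (1 / r) := by
        rw [← Real.mul_rpow (by positivity) (by positivity), ← Real.rpow_mul (by positivity),
          ← Real.rpow_mul (by positivity)]
        congr 1
        field_simp
      rw [mul_assoc _ _ (|t| ^ _), e1, Real.mul_rpow (x := 4 * r / (r - 2)) (by positivity) (by positivity),
        Real.mul_rpow (by norm_num) hA.le, Real.mul_rpow (by positivity) (by positivity)]
      ring
    · field_simp

theorem lp_dual {X : Type*} [MeasurableSpace X] {μ : Measure X} [SigmaFinite μ] {p q : ℝ}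
    (hpq : p.HolderConjugate q) {g : X → ℝ≥0∞} (hg : Measurable g) (M : ℝ≥0∞)
    (H : ∀ h : X → ℝ≥0∞, Measurable h → ∫⁻ x, g x * h x ∂μ ≤ M * (∫⁻ x, h x ^ q ∂μ) ^ (1 / q)) :
    (∫⁻ x, g x ^ p ∂μ) ^ (1 / p) ≤ M := by
  have hp := hpq.pos
  have hq := hpq.symm.pos
  let G : ℕ → X → ℝ≥0∞ := fun n => (spanningSets μ n).indicator (fun x => min (g x) n)
  have hGm : ∀ n, Measurable (G n) := fun n =>
    (hg.min measurable_const).indicator (measurableSet_spanningSets μ n)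
  have hGle : ∀ n x, G n x ≤ g x := by
    intro n x
    by_cases hx : x ∈ spanningSets μ n <;> simp [G, hx]
  have hI : ∀ n, ∫⁻ x, G n x ^ p ∂μ ≤ M ^ p := by
    intro n
    set I := ∫⁻ x, G n x ^ p ∂μ with hIdef
    have hfin : I ≠ ⊤ := by
      have : I ≤ ∫⁻ x, (spanningSets μ n).indicator (fun _ => (n : ℝ≥0∞) ^ p) x ∂μ := by
        apply lintegral_mono
        intro x
        by_cases hx : x ∈ spanningSets μ n
        · simp only [G, hx, Set.indicator_of_mem]
          exact ENNReal.rpow_le_rpow (min_le_right _ _) hp.le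
        · simp [G, hx, hp]
      rw [lintegral_indicator_const (measurableSet_spanningSets μ n)] at this
      exact (this.trans_lt (ENNReal.mul_lt_top (ENNReal.rpow_lt_top_of_nonneg hp.le (by simp))
        (measure_spanningSets_lt_top μ n))).ne
    rcases eq_or_ne I 0 with h0 | h0
    · rw [h0]; exact zero_le
    have h1 := H (fun x => G n x ^ (p - 1)) ((hGm n).pow_const _)
    have h2 : I ≤ M * I ^ (1 / q) := by
      calc I ≤ ∫⁻ x, g x * G n x ^ (p - 1) ∂μ := by
            apply lintegral_mono
            intro x
            simp only
            calc G n x ^ p = G n x ^ (1 + (p - 1)) := by congr 1; ring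
              _ = G n x * G n x ^ (p - 1) := by
                rw [ENNReal.rpow_add_of_nonneg _ _ (by norm_num) hpq.sub_one_pos.le, ENNReal.rpow_one]
              _ ≤ _ := by gcongr; exact hGle n x
        _ ≤ _ := h1
        _ = M * I ^ (1 / q) := by
            congr 3
            ext x
            rw [← ENNReal.rpow_mul, hpq.sub_one_mul_conj]
    have h3 : I = I ^ (1 / p) * I ^ (1 / q) := by
      rw [← ENNReal.rpow_add _ _ h0 hfin, one_div, one_div, hpq.inv_add_inv_eq_one, ENNReal.rpow_one]
    have h4 : I ^ (1 / p) ≤ M := by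
      have c0 : I ^ (1 / q) ≠ 0 := by simp [h0, hfin]
      have c1 : I ^ (1 / q) ≠ ⊤ := by simp [h0, hfin]
      rw [← ENNReal.mul_le_mul_iff_left c0 c1, ← h3]
      exact h2
    calc I = (I ^ (1 / p)) ^ p := by rw [← ENNReal.rpow_mul]; simp [hp.ne']
      _ ≤ _ := by gcongr
  have hlim : ∀ x, Tendsto (fun n => G n x ^ p) atTop (𝓝 (g x ^ p)) := by
    intro x
    apply (ENNReal.continuous_rpow_const.tendsto (g x)).comp
    have : Tendsto (fun n : ℕ => min (g x) (n : ℝ≥0∞)) atTop (𝓝 (min (g x) ⊤)) :=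
      tendsto_const_nhds.min ENNReal.tendsto_nat_nhds_top
    rw [min_eq_left le_top] at this
    apply this.congr'
    have hx : x ∈ spanningSets μ (spanningSetsIndex μ x) := mem_spanningSetsIndex μ x
    filter_upwards [eventually_ge_atTop (spanningSetsIndex μ x)] with n hn
    have : x ∈ spanningSets μ n := monotone_spanningSets μ hn hx
    simp [G, this]
  have hfatou : ∫⁻ x, g x ^ p ∂μ ≤ M ^ p := by
    calc ∫⁻ x, g x ^ p ∂μ = ∫⁻ x, liminf (fun n => G n x ^ p) atTop ∂μ := by
          congr 1; ext x; exact (hlim x).liminf_eq.symm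
      _ ≤ liminf (fun n => ∫⁻ x, G n x ^ p ∂μ) atTop :=
          lintegral_liminf_le fun n => (hGm n).pow_const _
      _ ≤ liminf (fun _ : ℕ => M ^ p) atTop := liminf_le_liminf (Eventually.of_forall hI)
      _ = M ^ p := by simp
  calc (∫⁻ x, g x ^ p ∂μ) ^ (1 / p) ≤ (M ^ p) ^ (1 / p) := by gcongr
    _ = M := by rw [← ENNReal.rpow_mul]; simp [hp.ne']

theorem minkowski_lint {X Y : Type*} [MeasurableSpace X] [MeasurableSpace Y] {μ : Measure X} {ν : Measure Y}
    [SigmaFinite μ] [SFinite ν] {p : ℝ} (hp : 1 < p) {f : X → Y → ℝ≥0∞}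
    (hf : Measurable (Function.uncurry f)) :
    (∫⁻ x, (∫⁻ y, f x y ∂ν) ^ p ∂μ) ^ (1 / p) ≤ ∫⁻ y, (∫⁻ x, f x y ^ p ∂μ) ^ (1 / p) ∂ν := by
  have hpq := Real.HolderConjugate.conjExponent hp
  apply lp_dual hpq hf.lintegral_prod_right
  intro h hh
  calc ∫⁻ x, (∫⁻ y, f x y ∂ν) * h x ∂μ = ∫⁻ x, ∫⁻ y, f x y * h x ∂ν ∂μ := by
        congr 1; ext x
        rw [lintegral_mul_const]
        exact hf.comp measurable_prodMk_left
    _ = ∫⁻ y, ∫⁻ x, f x y * h x ∂μ ∂ν := by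
        apply lintegral_lintegral_swap
        exact (hf.mul (hh.comp measurable_fst)).aemeasurable
    _ ≤ ∫⁻ y, (∫⁻ x, f x y ^ p ∂μ) ^ (1 / p) * (∫⁻ x, h x ^ p.conjExponent ∂μ) ^ (1 / p.conjExponent) ∂ν := by
        apply lintegral_mono
        intro y
        exact ENNReal.lintegral_mul_le_Lp_mul_Lq μ hpq (hf.comp measurable_prodMk_right).aemeasurable hh.aemeasurable
    _ = _ := by
        rw [lintegral_mul_const]
        apply Measurable.pow_const
        apply Measurable.lintegral_prod_right
        exact ((hf.comp measurable_swap).pow_const p)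


theorem lint_abs (h : ℝ → ℝ≥0∞) :
    ∫⁻ u, h |u| = 2 * ∫⁻ u in Set.Ioi (0 : ℝ), h u := by
  have e1 : ∫⁻ u in Set.Ioi (0 : ℝ), h |u| = ∫⁻ u in Set.Ioi (0 : ℝ), h u :=
    setLIntegral_congr_fun measurableSet_Ioi fun u hu => by rw [abs_of_pos hu]
  have e2 : ∫⁻ u in Set.Iio (0 : ℝ), h |u| = ∫⁻ u in Set.Ioi (0 : ℝ), h u := by
    rw [← e1]
    have := (Measure.measurePreserving_neg (volume : Measure ℝ)).setLIntegral_comp_preimage_emb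
      (MeasurableEquiv.neg ℝ).measurableEmbedding (fun u => h |u|) (Set.Ioi (0:ℝ))
    simpa using this
  rw [← lintegral_add_compl _ (measurableSet_Ioi (a := (0:ℝ))), Set.compl_Ioi,
    setLIntegral_congr Iio_ae_eq_Iic.symm, e1, e2, two_mul]

theorem hls_pt {q : ℝ} (hq : 2 < q) {g : ℝ → ℝ≥0∞} (hg : Measurable g)
    (hg1 : ∫⁻ τ, g τ ^ (q / (q - 1)) ≤ 1) (x : ℝ) (s : ℝ≥0∞) :
    ∫⁻ τ, min (g τ) s * ENNReal.ofReal (|x - τ| ^ (-(2 / q))) ≤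
      ENNReal.ofReal (2 / (1 - 2 / q) + 2) * s ^ (q / (q - 1) - 1) := by
  have hq0 : 0 < q := by linarith
  have hq1 : 0 < q - 1 := by linarith
  set p := q / (q - 1) with hp
  have hp1 : 1 < p := by rw [hp, lt_div_iff₀ hq1]; linarith
  have hl : 0 < 1 - 2 / q := by rw [sub_pos, div_lt_one hq0]; exact hq
  have hc : 0 < 2 / (1 - 2 / q) + 2 := by positivity
  rcases eq_or_ne s ⊤ with hst | hst
  · rw [hst, ENNReal.top_rpow_of_pos (by linarith), ENNReal.mul_top]
    · exact le_top
    · rw [Ne, ENNReal.ofReal_eq_zero, not_le]; exact hc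
  rcases eq_or_ne s 0 with hs0 | hs0
  · simp [hs0]
  obtain ⟨σ, hσ, rfl⟩ : ∃ σ : ℝ, 0 < σ ∧ s = ENNReal.ofReal σ :=
    ⟨s.toReal, ENNReal.toReal_pos hs0 hst, (ENNReal.ofReal_toReal hst).symm⟩
  set R := σ ^ (-p) with hR
  have hR0 : 0 < R := by positivity
  have hpq : p.HolderConjugate q := by
    rw [Real.holderConjugate_iff]; refine ⟨hp1, ?_⟩; rw [hp]; field_simp; ring
  have tr := lintegral_sub_left_eq_self (μ := (volume : Measure ℝ))
    (fun τ => min (g τ) (ENNReal.ofReal σ) * ENNReal.ofReal (|x - τ| ^ (-(2 / q)))) x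
  rw [← tr]
  simp only [sub_sub_cancel]
  let k : ℝ → ℝ≥0∞ := fun u => (Set.Ioi R).indicator (fun u => ENNReal.ofReal (u ^ (-(2 / q)))) u
  let k0 : ℝ → ℝ≥0∞ := fun u => (Set.Iic R).indicator (fun u => ENNReal.ofReal (u ^ (-(2 / q)))) u
  have hkm : Measurable k := Measurable.indicator (by fun_prop) measurableSet_Ioi
  have hk0m : Measurable k0 := Measurable.indicator (by fun_prop) measurableSet_Iic
  have hpt : ∀ u, min (g (x - u)) (ENNReal.ofReal σ) * ENNReal.ofReal (|u| ^ (-(2 / q))) ≤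
      ENNReal.ofReal σ * k0 |u| + g (x - u) * k |u| := by
    intro u
    by_cases h : |u| ≤ R
    · have : k0 |u| = ENNReal.ofReal (|u| ^ (-(2 / q))) := by simp [k0, h]
      rw [this]
      exact le_add_right (by gcongr; exact min_le_right _ _)
    · have : k |u| = ENNReal.ofReal (|u| ^ (-(2 / q))) := by simp [k, not_le.mp h]
      rw [this]
      exact le_add_left (by gcongr; exact min_le_left _ _)
  have hA : ∫⁻ u, k0 |u| = ENNReal.ofReal (2 / (1 - 2 / q) * R ^ (1 - 2 / q)) := by
    rw [lint_abs]
    simp only [k0]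
    rw [lintegral_indicator measurableSet_Iic,
          Measure.restrict_restrict measurableSet_Iic, Set.inter_comm, Set.Ioi_inter_Iic,
          lint_rpow_Ioc (by linarith) hR0.le, show (2 : ℝ≥0∞) = ENNReal.ofReal 2 by simp,
          ← ENNReal.ofReal_mul (by norm_num), show -(2 / q) + 1 = 1 - 2 / q by ring]
    congr 1; ring
  have hB : ∫⁻ u, (k |u|) ^ q = ENNReal.ofReal (2 / R) := by
    rw [lint_abs (fun u => k u ^ q)]
    have e : ∀ u, k u ^ q = (Set.Ioi R).indicator (fun u => ENNReal.ofReal (u ^ (-2 : ℝ))) u := by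
      intro u
      by_cases h : R < u
      · have hu : 0 < u := hR0.trans h
        simp only [k, Set.mem_Ioi, h, Set.indicator_of_mem]
        rw [ENNReal.ofReal_rpow_of_nonneg (by positivity) hq0.le, ← Real.rpow_mul hu.le]
        congr 2; field_simp
      · simp [k, h, hq0]
    simp only [e]
    rw [lintegral_indicator measurableSet_Ioi, Measure.restrict_restrict measurableSet_Ioi,
      Set.inter_eq_left.mpr (Set.Ioi_subset_Ioi hR0.le), ← ofReal_integral_eq_lintegral_ofReal,
      integral_Ioi_rpow_of_lt (by norm_num) hR0, show (2 : ℝ≥0∞) = ENNReal.ofReal 2 by simp,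
      ← ENNReal.ofReal_mul (by norm_num)]
    · congr 1
      rw [show (-2 + 1 : ℝ) = -1 by norm_num, Real.rpow_neg_one]
      field_simp
    · exact integrableOn_Ioi_rpow_of_lt (by norm_num) hR0
    · filter_upwards [self_mem_ae_restrict measurableSet_Ioi] with u hu
      have : 0 < u := hR0.trans hu
      simp only [Pi.zero_apply]; positivity
  have hgx : ∫⁻ u, g (x - u) ^ p ≤ 1 := by
    rw [lintegral_sub_left_eq_self (μ := (volume : Measure ℝ)) (fun τ => g τ ^ p) x]; exact hg1
  calc ∫⁻ u, min (g (x - u)) (ENNReal.ofReal σ) * ENNReal.ofReal (|u| ^ (-(2 / q)))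
      ≤ ∫⁻ u, (ENNReal.ofReal σ * k0 |u| + g (x - u) * k |u|) := lintegral_mono hpt
    _ = ENNReal.ofReal σ * (∫⁻ u, k0 |u|) + ∫⁻ u, g (x - u) * k |u| := by
        rw [lintegral_add_left (by fun_prop), lintegral_const_mul' _ _ ENNReal.ofReal_ne_top]
    _ ≤ ENNReal.ofReal σ * ENNReal.ofReal (2 / (1 - 2 / q) * R ^ (1 - 2 / q)) +
          1 * ENNReal.ofReal (2 / R) ^ (1 / q) := by
        rw [hA]
        gcongr
        refine (ENNReal.lintegral_mul_le_Lp_mul_Lq volume hpq (by fun_prop) (by fun_prop)).trans ?_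
        rw [hB]
        gcongr
        exact ENNReal.rpow_le_one hgx (by have := hpq.pos; positivity)
    _ ≤ _ := by
        rw [one_mul, ENNReal.ofReal_rpow_of_nonneg (by positivity) (by positivity), ← ENNReal.ofReal_mul hσ.le,
          ← ENNReal.ofReal_add (by positivity) (by positivity), ENNReal.ofReal_rpow_of_nonneg hσ.le (by linarith),
          ← ENNReal.ofReal_mul hc.le]
        apply ENNReal.ofReal_le_ofReal
        have e1 : σ * R ^ (1 - 2 / q) = σ ^ (p - 1) := by
          rw [hR, ← Real.rpow_mul hσ.le, ← Real.rpow_one_add' hσ.le]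
          · congr 1; rw [hp]; field_simp; ring
          · have : 1 + -p * (1 - 2 / q) = p - 1 := by rw [hp]; field_simp; ring
            rw [this]; linarith
        have e2 : (2 / R) ^ (1 / q) = 2 ^ (1 / q) * σ ^ (p - 1) := by
          rw [Real.div_rpow (by norm_num) hR0.le, hR, ← Real.rpow_mul hσ.le, div_eq_mul_inv, ← Real.rpow_neg hσ.le]
          congr 2
          rw [hp]; field_simp; ring
        have e3 : (2:ℝ) ^ (1 / q) ≤ 2 := by
          calc (2:ℝ) ^ (1 / q) ≤ 2 ^ (1:ℝ) := by
                apply Real.rpow_le_rpow_of_exponent_le (by norm_num)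
                rw [div_le_one hq0]; linarith
            _ = 2 := by simp
        have e4 : 0 ≤ σ ^ (p - 1) := by positivity
        rw [e2, show σ * (2 / (1 - 2 / q) * R ^ (1 - 2 / q)) = 2 / (1 - 2 / q) * (σ * R ^ (1 - 2 / q)) by ring, e1,
          add_mul]
        gcongr

theorem hls_norm {q : ℝ} (hq : 2 < q) {f g : ℝ → ℝ≥0∞} (hf : Measurable f) (hg : Measurable g)
    (hf1 : ∫⁻ τ, f τ ^ (q / (q - 1)) ≤ 1) (hg1 : ∫⁻ τ, g τ ^ (q / (q - 1)) ≤ 1) :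
    ∫⁻ t, ∫⁻ τ, f t * g τ * ENNReal.ofReal (|t - τ| ^ (-(2 / q))) ≤
      2 * ENNReal.ofReal (2 / (1 - 2 / q) + 2) := by
  have hq1 : 0 < q - 1 := by linarith
  have hp1 : 1 < q / (q - 1) := by rw [lt_div_iff₀ hq1]; linarith
  have half : ∀ f g : ℝ → ℝ≥0∞, Measurable f → Measurable g → ∫⁻ τ, f τ ^ (q / (q - 1)) ≤ 1 →
      ∫⁻ τ, g τ ^ (q / (q - 1)) ≤ 1 →
      ∫⁻ t, ∫⁻ τ, f t * (min (g τ) (f t) * ENNReal.ofReal (|t - τ| ^ (-(2 / q)))) ≤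
        ENNReal.ofReal (2 / (1 - 2 / q) + 2) := by
    intro f g hf hg hf1 hg1
    calc _ ≤ ∫⁻ t, ENNReal.ofReal (2 / (1 - 2 / q) + 2) * f t ^ (q / (q - 1)) := by
          apply lintegral_mono
          intro t
          simp only
          rw [lintegral_const_mul _ (by fun_prop)]
          calc _ ≤ f t * (ENNReal.ofReal (2 / (1 - 2 / q) + 2) * f t ^ (q / (q - 1) - 1)) :=
                mul_le_mul_right (hls_pt hq hg hg1 t (f t)) _
            _ = ENNReal.ofReal (2 / (1 - 2 / q) + 2) * (f t ^ (1:ℝ) * f t ^ (q / (q - 1) - 1)) := by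
                rw [ENNReal.rpow_one]; ring
            _ = _ := by
                rw [← ENNReal.rpow_add_of_nonneg _ _ (by norm_num) (by linarith)]
                congr 2; ring
      _ ≤ _ := by
          rw [lintegral_const_mul' _ _ ENNReal.ofReal_ne_top]
          exact mul_le_of_le_one_right' hf1
  have hm : ∀ f g : ℝ → ℝ≥0∞, Measurable f → Measurable g → Measurable (fun z : ℝ × ℝ =>
      f z.1 * (min (g z.2) (f z.1) * ENNReal.ofReal (|z.1 - z.2| ^ (-(2 / q))))) := by
    intro f g hf hg
    fun_prop
  calc _ ≤ ∫⁻ t, ∫⁻ τ, (f t * (min (g τ) (f t) * ENNReal.ofReal (|t - τ| ^ (-(2 / q)))) +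
          g τ * (min (f t) (g τ) * ENNReal.ofReal (|τ - t| ^ (-(2 / q))))) := by
        apply lintegral_mono; intro t
        apply lintegral_mono; intro τ
        simp only
        rw [abs_sub_comm τ t, ← mul_assoc, ← mul_assoc, ← add_mul]
        gcongr
        rcases le_total (f t) (g τ) with h | h
        · rw [min_eq_left h]
          exact le_add_left (mul_comm _ _).le
        · rw [min_eq_left h]
          exact le_add_right le_rfl
    _ = (∫⁻ t, ∫⁻ τ, f t * (min (g τ) (f t) * ENNReal.ofReal (|t - τ| ^ (-(2 / q))))) +
        ∫⁻ t, ∫⁻ τ, g τ * (min (f t) (g τ) * ENNReal.ofReal (|τ - t| ^ (-(2 / q)))) := by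
        rw [← lintegral_add_left (hm f g hf hg).lintegral_prod_right]
        congr 1; ext t
        rw [lintegral_add_left (by fun_prop)]
    _ ≤ _ := by
        rw [two_mul]
        gcongr
        · exact half f g hf hg hf1 hg1
        · rw [lintegral_lintegral_swap]
          · exact half g f hg hf hg1 hf1
          · exact ((hm g f hg hf).comp measurable_swap).aemeasurable

theorem hls_bil {q : ℝ} (hq : 2 < q) {f g : ℝ → ℝ≥0∞} (hf : Measurable f) (hg : Measurable g) :
    ∫⁻ t, (∫⁻ τ, ENNReal.ofReal (|t - τ| ^ (-(2 / q))) * g τ) * f t ≤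
      2 * ENNReal.ofReal (2 / (1 - 2 / q) + 2) * (∫⁻ τ, g τ ^ (q / (q - 1))) ^ (1 / (q / (q - 1))) *
       (∫⁻ τ, f τ ^ (q / (q - 1))) ^ (1 / (q / (q - 1))) := by
  have hq1 : 0 < q - 1 := by linarith
  have hq0 : 0 < q := by linarith
  set p := q / (q - 1) with hp
  have hp1 : 1 < p := by rw [hp, lt_div_iff₀ hq1]; linarith
  have hp0 : 0 < p := by linarith
  have hl : 0 < 1 - 2 / q := by rw [sub_pos, div_lt_one hq0]; exact hq
  have hc : 0 < 2 / (1 - 2 / q) + 2 := by positivity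
  have hc' : 2 * ENNReal.ofReal (2 / (1 - 2 / q) + 2) ≠ 0 := by
    simp only [ne_eq, mul_eq_zero, OfNat.ofNat_ne_zero, ENNReal.ofReal_eq_zero, false_or, not_le]
    exact hc
  set b := (∫⁻ τ, g τ ^ p) ^ (1 / p) with hb
  set a := (∫⁻ τ, f τ ^ p) ^ (1 / p) with ha
  have hz : ∀ h : ℝ → ℝ≥0∞, Measurable h → (∫⁻ τ, h τ ^ p) ^ (1 / p) = 0 → ∀ᵐ τ, h τ = 0 := by
    intro h hh h0
    rw [ENNReal.rpow_eq_zero_iff_of_pos (by positivity), lintegral_eq_zero_iff (by fun_prop)] at h0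
    filter_upwards [h0] with τ hτ
    simpa [hp0, not_lt.mpr hp0.le] using hτ
  rcases eq_or_ne b 0 with hb0 | hb0
  · have : ∀ t, ∫⁻ τ, ENNReal.ofReal (|t - τ| ^ (-(2 / q))) * g τ = 0 := by
      intro t
      rw [lintegral_eq_zero_iff (by fun_prop)]
      filter_upwards [hz g hg hb0] with τ hτ
      simp [hτ]
    simp [this]
  rcases eq_or_ne a 0 with ha0 | ha0
  · apply le_of_eq_of_le _ (zero_le (a := _))
    rw [← lintegral_zero (μ := (volume : Measure ℝ))]
    apply lintegral_congr_ae
    filter_upwards [hz f hf ha0] with t ht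
    simp [ht]
  rcases eq_or_ne b ⊤ with hbt | hbt
  · rw [hbt, ENNReal.mul_top hc', ENNReal.top_mul ha0]; exact le_top
  rcases eq_or_ne a ⊤ with hat | hat
  · rw [hat, ENNReal.mul_top (mul_ne_zero hc' hb0)]; exact le_top
  have hnorm : ∀ h : ℝ → ℝ≥0∞, Measurable h → ∀ c, c = (∫⁻ τ, h τ ^ p) ^ (1 / p) → c ≠ 0 → c ≠ ⊤ →
      ∫⁻ τ, (c⁻¹ * h τ) ^ p ≤ 1 := by
    intro h hh c hc hc0 hct
    have e : ∫⁻ τ, h τ ^ p = c ^ p := by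
      rw [hc, ← ENNReal.rpow_mul]; simp [hp0.ne']
    simp_rw [ENNReal.mul_rpow_of_nonneg _ _ hp0.le]
    rw [lintegral_const_mul _ (by fun_prop), e, ← ENNReal.mul_rpow_of_nonneg _ _ hp0.le,
      ENNReal.inv_mul_cancel hc0 hct, ENNReal.one_rpow]
  have key := hls_norm hq (f := fun t => a⁻¹ * f t) (g := fun t => b⁻¹ * g t) (by fun_prop) (by fun_prop)
    (hnorm f hf a rfl ha0 hat) (hnorm g hg b rfl hb0 hbt)
  have e : ∫⁻ t, ∫⁻ τ, (a⁻¹ * f t) * (b⁻¹ * g τ) * ENNReal.ofReal (|t - τ| ^ (-(2 / q))) =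
      (a⁻¹ * b⁻¹) * ∫⁻ t, (∫⁻ τ, ENNReal.ofReal (|t - τ| ^ (-(2 / q))) * g τ) * f t := by
    rw [← lintegral_const_mul' _ _ (ENNReal.mul_ne_top (ENNReal.inv_ne_top.mpr ha0) (ENNReal.inv_ne_top.mpr hb0))]
    congr 1; ext t
    rw [← lintegral_mul_const _ (by fun_prop), ← lintegral_const_mul _ (by fun_prop)]
    congr 1; ext τ
    ring
  rw [e] at key
  calc _ = (a * b) * ((a⁻¹ * b⁻¹) * ∫⁻ t, (∫⁻ τ, ENNReal.ofReal (|t - τ| ^ (-(2 / q))) * g τ) * f t) := by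
        rw [← mul_assoc, mul_mul_mul_comm, ENNReal.mul_inv_cancel ha0 hat, ENNReal.mul_inv_cancel hb0 hbt]
        simp
    _ ≤ (a * b) * (2 * ENNReal.ofReal (2 / (1 - 2 / q) + 2)) := mul_le_mul_right key _
    _ = _ := by ring

theorem hls {q : ℝ} (hq : 2 < q) : ∃ C : ℝ, 0 < C ∧ ∀ g : ℝ → ℝ≥0∞, Measurable g →
    (∫⁻ t, (∫⁻ τ, ENNReal.ofReal (|t - τ| ^ (-(2 / q))) * g τ) ^ q) ^ (1 / q) ≤
      ENNReal.ofReal C * (∫⁻ τ, g τ ^ (q / (q - 1))) ^ (1 / (q / (q - 1))) := by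
  have hq0 : 0 < q := by linarith
  have hq1 : 0 < q - 1 := by linarith
  have hl : 0 < 1 - 2 / q := by rw [sub_pos, div_lt_one hq0]; exact hq
  refine ⟨2 * (2 / (1 - 2 / q) + 2), by positivity, fun g hg => ?_⟩
  have hpq : q.HolderConjugate (q / (q - 1)) := by
    rw [Real.holderConjugate_iff]; refine ⟨by linarith, ?_⟩; field_simp; ring
  have hm : Measurable (Function.uncurry fun t τ => ENNReal.ofReal (|t - τ| ^ (-(2 / q))) * g τ) := by
    unfold Function.uncurry
    fun_prop
  apply lp_dual hpq hm.lintegral_prod_right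
  intro h hh
  refine (hls_bil hq hh hg).trans (le_of_eq ?_)
  rw [ENNReal.ofReal_mul (by norm_num)]
  simp


def bF (b w : ℝ) : ℝ := ∑' k : ℕ, (-1 / 4) ^ k / ((k.factorial : ℝ) * Real.Gamma (k + b)) * w ^ k

theorem bF_coef {b : ℝ} (hb : 0 < b) : ∃ M : ℝ, 0 < M ∧ ∀ k : ℕ, M ≤ Real.Gamma (k + b) := by
  have hG := Real.Gamma_pos_of_pos hb
  have h1 : ∀ k : ℕ, b * Real.Gamma b ≤ Real.Gamma ((k + 1 : ℕ) + b) := by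
    intro k
    induction k with
    | zero =>
      have := Real.Gamma_add_one hb.ne'
      simp only [zero_add, Nat.cast_one]
      rw [add_comm, this]
    | succ k ih =>
      have h2 : ((k + 1 + 1 : ℕ) : ℝ) + b = ((k + 1 : ℕ) + b) + 1 := by push_cast; ring
      have h3 : (0 : ℝ) < ((k + 1 : ℕ) : ℝ) + b := by positivity
      rw [h2, Real.Gamma_add_one h3.ne']
      have h4 : (1 : ℝ) ≤ ((k + 1 : ℕ) : ℝ) + b := by
        push_cast
        have : (0 : ℝ) ≤ k := Nat.cast_nonneg k
        linarith
      have h5 := Real.Gamma_pos_of_pos h3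
      nlinarith
  refine ⟨min (Real.Gamma b) (b * Real.Gamma b), by positivity, fun k => ?_⟩
  rcases k with _ | k
  · simp
  · exact (min_le_right _ _).trans (h1 k)

theorem bF_bound {b : ℝ} (hb : 0 < b) : ∃ M : ℝ, 0 < M ∧ ∀ (k : ℕ) (w R : ℝ), |w| ≤ R →
    ‖(-1 / 4) ^ k / ((k.factorial : ℝ) * Real.Gamma (k + b)) * w ^ k‖ ≤ M * (R ^ k / k.factorial) := by
  obtain ⟨M, hM, h⟩ := bF_coef hb
  refine ⟨1 / M, by positivity, fun k w R hR => ?_⟩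
  have hG : 0 < Real.Gamma (k + b) := hM.trans_le (h k)
  have hR0 : 0 ≤ R := (abs_nonneg w).trans hR
  rw [norm_mul, norm_div, norm_pow, norm_pow, norm_mul, Real.norm_of_nonneg hG.le,
    Real.norm_of_nonneg (by positivity : (0 : ℝ) ≤ k.factorial), Real.norm_eq_abs, Real.norm_eq_abs]
  have h1 : |(-1 / 4 : ℝ)| ^ k ≤ 1 := pow_le_one₀ (abs_nonneg _) (by rw [abs_le]; norm_num)
  have h2 : |w| ^ k ≤ R ^ k := pow_le_pow_left₀ (abs_nonneg _) hR k
  calc |(-1 / 4 : ℝ)| ^ k / (k.factorial * Real.Gamma (k + b)) * |w| ^ k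
      ≤ 1 / (k.factorial * M) * R ^ k := by
        gcongr
        exact h k
    _ = 1 / M * (R ^ k / k.factorial) := by
        field_simp

theorem bF_summable {b : ℝ} (hb : 0 < b) (w : ℝ) :
    Summable fun k : ℕ => (-1 / 4) ^ k / ((k.factorial : ℝ) * Real.Gamma (k + b)) * w ^ k := by
  obtain ⟨M, hM, h⟩ := bF_bound hb
  exact Summable.of_norm_bounded ((Real.summable_pow_div_factorial |w|).mul_left M)
    (fun k => h k w |w| le_rfl)

theorem bF_term (b : ℝ) (k : ℕ) :
    (-1 / 4 : ℝ) ^ (k + 1) / (((k + 1).factorial : ℝ) * Real.Gamma ((k + 1 : ℕ) + b)) * (k + 1 : ℕ) =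
      -1 / 4 * ((-1 / 4) ^ k / ((k.factorial : ℝ) * Real.Gamma (k + (b + 1)))) := by
  have : (((k + 1 : ℕ) : ℝ) + b) = k + (b + 1) := by push_cast; ring
  rw [this, Nat.factorial_succ, pow_succ]
  push_cast
  have h1 : (k + 1 : ℝ) ≠ 0 := by positivity
  rw [div_mul_eq_mul_div, mul_assoc (k + 1 : ℝ), mul_comm (k + 1 : ℝ), mul_div_mul_right _ _ h1]
  ring

theorem bF_deriv {b : ℝ} (hb : 0 < b) (w : ℝ) :
    HasDerivAt (bF b) (-1 / 4 * bF (b + 1) w) w := by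
  obtain ⟨M, hM, h⟩ := bF_bound (by linarith : 0 < b + 1)
  have hR : (0 : ℝ) < |w| + 1 := by positivity
  let g' : ℕ → ℝ → ℝ := fun k y =>
    (-1 / 4) ^ k / ((k.factorial : ℝ) * Real.Gamma (k + b)) * (k * y ^ (k - 1))
  have hg's : ∀ (k : ℕ) (y : ℝ), g' (k + 1) y =
      -1 / 4 * ((-1 / 4) ^ k / ((k.factorial : ℝ) * Real.Gamma (k + (b + 1))) * y ^ k) := by
    intro k y
    have := bF_term b k
    simp only [g', Nat.add_sub_cancel]
    rw [← mul_assoc, this]; ring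
  have hg'0 : ∀ y, g' 0 y = 0 := by intro y; simp [g']
  let u : ℕ → ℝ := fun k => match k with
    | 0 => 0
    | k + 1 => M * ((|w| + 1) ^ k / k.factorial)
  have hu : Summable u := by
    rw [← summable_nat_add_iff 1]
    exact (Real.summable_pow_div_factorial (|w| + 1)).mul_left M
  have key := hasDerivAt_tsum_of_isPreconnected (t := Metric.ball (0 : ℝ) (|w| + 1)) (u := u)
    (g := fun k y => (-1 / 4) ^ k / ((k.factorial : ℝ) * Real.Gamma (k + b)) * y ^ k) (g' := g')
    (y₀ := 0) (y := w) hu Metric.isOpen_ball (convex_ball _ _).isPreconnected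
    (fun n y _ => (hasDerivAt_pow n y).const_mul _) ?_ (Metric.mem_ball_self hR)
    (bF_summable hb 0) (by simp)
  · have hs : ∑' n, g' n w = -1 / 4 * bF (b + 1) w := by
      have hsm : Summable fun n => g' n w := by
        rw [← summable_nat_add_iff 1]
        simp only [hg's]
        exact (bF_summable (by linarith : 0 < b + 1) w).mul_left _
      rw [hsm.tsum_eq_zero_add, hg'0, zero_add]
      simp only [hg's]
      rw [tsum_mul_left]; rfl
    rw [hs] at key
    exact key
  · intro n y hy
    rcases n with _ | k
    · rw [hg'0]; simp [u]
    · rw [hg's, norm_mul]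
      have hy' : |y| ≤ |w| + 1 := by
        have := hy; rw [mem_ball_zero_iff, Real.norm_eq_abs] at this; exact this.le
      have := h k y _ hy'
      have h4 : ‖(-1 / 4 : ℝ)‖ ≤ 1 := by rw [Real.norm_eq_abs, abs_le]; norm_num
      calc _ ≤ 1 * _ := mul_le_mul h4 this (norm_nonneg _) zero_le_one
        _ = u (k + 1) := one_mul _

theorem bF_rec {b : ℝ} (hb : 0 < b) (w : ℝ) :
    bF b w = b * bF (b + 1) w - w / 4 * bF (b + 2) w := by
  have h2 := bF_summable (by linarith : 0 < b + 2) w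
  have h1 := bF_summable (by linarith : 0 < b + 1) w
  have h0 := bF_summable hb w
  unfold bF
  rw [h0.tsum_eq_zero_add, h1.tsum_eq_zero_add, mul_add, ← tsum_mul_left, ← tsum_mul_left,
    add_sub_assoc, ← Summable.tsum_sub (((summable_nat_add_iff 1).2 h1).mul_left _) (h2.mul_left _)]
  congr 1
  · simp [Real.Gamma_add_one hb.ne']
    have := Real.Gamma_pos_of_pos hb
    field_simp
  · refine tsum_congr fun k => ?_
    have e1 : (((k + 1 : ℕ) : ℝ) + (b + 1)) = (k + 1 + b) + 1 := by push_cast; ring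
    have e2 : (((k + 1 : ℕ) : ℝ) + b) = k + 1 + b := by push_cast; ring
    have e3 : ((k : ℝ) + (b + 2)) = (k + 1 + b) + 1 := by ring
    have hp : (0 : ℝ) < k + 1 + b := by positivity
    have hG := Real.Gamma_pos_of_pos hp
    rw [e1, e2, e3, Real.Gamma_add_one hp.ne', Nat.factorial_succ, pow_succ, pow_succ]
    push_cast
    have h1 : (k + 1 : ℝ) ≠ 0 := by positivity
    have h3 : (k.factorial : ℝ) ≠ 0 := by positivity
    field_simp
    ring

theorem bF_le {b : ℝ} (hb : 1 / 2 ≤ b) {w : ℝ} (hw : 0 ≤ w) : |bF b w| ≤ |bF b 0| := by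
  have hb0 : 0 < b := by linarith
  let E : ℝ → ℝ := fun w => bF b w ^ 2 + 4 * w * (-1 / 4 * bF (b + 1) w) ^ 2
  have hE : ∀ w, HasDerivAt E (-(2 * b - 1) / 4 * bF (b + 1) w ^ 2) w := by
    intro w
    have d0 := bF_deriv hb0 w
    have d1 := bF_deriv (by linarith : 0 < b + 1) w
    have := (d0.pow 2).add ((((hasDerivAt_id w).const_mul 4)).mul ((d1.const_mul (-1 / 4)).pow 2))
    refine this.congr_deriv ?_
    have hr := bF_rec hb0 w
    have e : b + 1 + 1 = b + 2 := by ring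
    rw [e]
    simp only [id]
    push_cast
    rw [hr]
    simp
    ring
  have hanti : Antitone E := antitone_of_hasDerivAt_nonpos hE (fun w => by
    have := sq_nonneg (bF (b + 1) w)
    have h2 : 0 ≤ 2 * b - 1 := by linarith
    have := mul_nonneg h2 this
    simp only [Pi.zero_apply]
    linarith)
  have := hanti hw
  simp only [E] at this
  apply abs_le_of_sq_le_sq' _ (abs_nonneg _) |> abs_le.2
  rw [sq_abs]
  have := mul_nonneg hw (sq_nonneg (-1 / 4 * bF (b + 1) w))
  nlinarith

theorem bessel_bdd {a : ℝ} (ha : 0 ≤ a) : ∃ C : ℝ, 0 < C ∧ ∀ s : ℝ, 0 < s →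
    |s ^ ((1 - a) / 2) * besselJ ((a - 1) / 2) s| ≤ C := by
  refine ⟨2 ^ ((1 - a) / 2) * |bF ((a + 1) / 2) 0| + 1, by positivity, fun s hs => ?_⟩
  have : s ^ ((1 - a) / 2) * besselJ ((a - 1) / 2) s = 2 ^ ((1 - a) / 2) * bF ((a + 1) / 2) (s ^ 2) := by
    unfold besselJ bF
    rw [← tsum_mul_left, ← tsum_mul_left]
    refine tsum_congr fun k => ?_
    have e1 : (k : ℝ) + (a - 1) / 2 + 1 = k + (a + 1) / 2 := by ring
    have hs2 : 0 < s / 2 := by positivity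
    have e2 : (s / 2) ^ (2 * (k : ℝ) + (a - 1) / 2) = (s / 2) ^ (2 * k) * (s / 2) ^ ((a - 1) / 2) := by
      rw [Real.rpow_add hs2]
      congr 1
      rw [← Real.rpow_natCast]; push_cast; rfl
    have e3 : s ^ ((1 - a) / 2) = 2 ^ ((1 - a) / 2) * (s / 2) ^ ((1 - a) / 2) := by
      rw [← Real.mul_rpow (by norm_num) hs2.le]; congr 1; ring
    have e4 : (s / 2) ^ ((1 - a) / 2) * (s / 2) ^ ((a - 1) / 2) = 1 := by
      rw [← Real.rpow_add hs2]
      have : (1 - a) / 2 + (a - 1) / 2 = 0 := by ring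
      rw [this, Real.rpow_zero]
    have e5 : (-1 : ℝ) ^ k * (s / 2) ^ (2 * k) = (-1 / 4) ^ k * (s ^ 2) ^ k := by
      rw [pow_mul, ← mul_pow, ← mul_pow]; congr 1; ring
    rw [e1, e2, e3]
    calc _ = 2 ^ ((1 - a) / 2) * ((s / 2) ^ ((1 - a) / 2) * (s / 2) ^ ((a - 1) / 2)) *
          ((-1 : ℝ) ^ k * (s / 2) ^ (2 * k)) / (k.factorial * Real.Gamma (k + (a + 1) / 2)) := by ring
      _ = _ := by rw [e4, e5]; ring
  rw [this, abs_mul, abs_of_pos (by positivity)]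
  have := bF_le (by linarith : 1 / 2 ≤ (a + 1) / 2) (sq_nonneg s)
  have h2 : (0 : ℝ) < 2 ^ ((1 - a) / 2) := by positivity
  nlinarith

theorem SaK_bdd {a : ℝ} (ha : 0 ≤ a) : ∃ C : ℝ, 0 < C ∧ ∀ z ζ t : ℝ, 0 < z → 0 < ζ → t ≠ 0 →
    ‖SaK a z ζ t‖ ≤ C * |t| ^ (-((a + 1) / 2)) := by
  obtain ⟨C, hC, h⟩ := bessel_bdd ha
  refine ⟨C, hC, fun z ζ t hz hζ ht => ?_⟩
  have ht' : 0 < |t| := abs_pos.2 ht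
  unfold SaK
  have n1 : ‖Complex.exp (-Complex.I * ((Real.sign t : ℝ) : ℂ) * (((a + 1) * Real.pi / 4 : ℝ) : ℂ))‖ = 1 := by
    rw [Complex.norm_exp]; simp
  have n2 : ‖Complex.exp (Complex.I * ((z ^ 2 + ζ ^ 2 : ℝ) : ℂ) / ((4 * t : ℝ) : ℂ))‖ = 1 := by
    rw [Complex.norm_exp, Complex.div_ofReal_re, Complex.re_mul_ofReal]; simp
  rw [norm_mul, norm_mul, norm_mul, norm_div, n1, n2, mul_one, mul_assoc, ← norm_mul,
    ← Complex.ofReal_mul, Complex.norm_real, Complex.norm_real, Real.norm_eq_abs, Real.norm_eq_abs]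
  have hb := h (z * ζ / (2 * |t|)) (by positivity)
  rw [abs_of_pos (by positivity : 0 < (2 * |t|) ^ ((a + 1) / 2)), mul_comm]
  have h3 : 1 / (2 * |t|) ^ ((a + 1) / 2) ≤ |t| ^ (-((a + 1) / 2)) := by
    rw [Real.rpow_neg ht'.le, ← one_div]
    apply one_div_le_one_div_of_le (by positivity)
    exact Real.rpow_le_rpow ht'.le (by linarith) (by positivity)
  exact mul_le_mul hb h3 (by positivity) hC.le


theorem slice_nice {d : ℕ} (F : SchwartzMap (((Fin d → ℝ) × ℝ) × ℝ) ℂ) (ζ τ : ℝ) :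
    Measurable (fun y : Fin d → ℝ => F ((y, ζ), τ)) ∧
    Integrable (fun y : Fin d → ℝ => F ((y, ζ), τ)) ∧
    MemLp (fun y : Fin d → ℝ => F ((y, ζ), τ)) 2 := by
  have hc : Continuous (fun y : Fin d → ℝ => F ((y, ζ), τ)) :=
    F.continuous.comp (by fun_prop)
  obtain ⟨A, hb0⟩ : ∃ A : ℝ, ∀ p, (1 + ‖p‖) ^ (d + 1) * ‖F p‖ ≤ A := by
    refine ⟨2 ^ (d + 1) * ((Finset.Iic (d + 1, 0)).sup fun m => SchwartzMap.seminorm ℝ m.1 m.2) F, fun p => ?_⟩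
    have := SchwartzMap.one_add_le_sup_seminorm_apply (𝕜 := ℝ) (m := (d + 1, 0)) (k := d + 1) (n := 0)
      le_rfl le_rfl F p
    rwa [norm_iteratedFDeriv_zero] at this
  have hb : ∀ y : Fin d → ℝ, (1 + ‖y‖) ^ (d + 1) * ‖F ((y, ζ), τ)‖ ≤ A := by
    intro y
    refine le_trans ?_ (hb0 ((y, ζ), τ))
    have h1 : ‖y‖ ≤ ‖(((y, ζ), τ) : ((Fin d → ℝ) × ℝ) × ℝ)‖ :=
      (norm_fst_le (y, ζ)).trans (norm_fst_le ((y, ζ), τ))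
    gcongr
  have hA : 0 ≤ A := le_trans (by positivity) (hb 0)
  have hint : Integrable (fun y : Fin d → ℝ => F ((y, ζ), τ)) := by
    have h0 := (integrable_one_add_norm (E := Fin d → ℝ) (μ := volume) (r := (d + 1 : ℕ)) (by
      simp)).const_mul A
    refine h0.mono' hc.aestronglyMeasurable (Eventually.of_forall fun y => ?_)
    have hp : (0 : ℝ) < 1 + ‖y‖ := by positivity
    rw [Real.rpow_neg hp.le, Real.rpow_natCast, ← div_eq_mul_inv, le_div_iff₀ (by positivity), mul_comm]
    exact hb y
  refine ⟨hc.measurable, hint, ?_⟩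
  rw [memLp_two_iff_integrable_sq_norm hc.aestronglyMeasurable]
  refine (hint.norm.const_mul A).mono'
    (hc.norm.pow 2).aestronglyMeasurable (Eventually.of_forall fun y => ?_)
  have h1 : ‖F ((y, ζ), τ)‖ ≤ A := by
    refine le_trans ?_ (hb y)
    have : (1 : ℝ) ≤ (1 + ‖y‖) ^ (d + 1) := one_le_pow₀ (by linarith [norm_nonneg y])
    nlinarith [norm_nonneg (F ((y, ζ), τ))]
  rw [Real.norm_of_nonneg (by positivity), sq]
  exact mul_le_mul_of_nonneg_right h1 (norm_nonneg _)

theorem sfree_zero {d : ℕ} (hd : 1 ≤ d) (x y : Fin d → ℝ) : Sfree d x y 0 = 0 := by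
  unfold Sfree
  rw [Complex.ofReal_zero, mul_zero, Complex.zero_cpow, zero_mul]
  have : (d : ℂ) ≠ 0 := by exact_mod_cast (by omega : d ≠ 0)
  simp [this]

/-- the weighted half-line measure -/
def nuA (a : ℝ) : Measure ℝ :=
  ((volume : Measure ℝ).restrict (Set.Ioi 0)).withDensity fun z => ENNReal.ofReal (z ^ a)

instance nuA_sf (a : ℝ) : SFinite (nuA a) := by unfold nuA; infer_instance

theorem nuA_pos (a : ℝ) : ∀ᵐ ζ ∂(nuA a), 0 < ζ := by
  apply (withDensity_absolutelyContinuous _ _).ae_le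
  exact ae_restrict_mem measurableSet_Ioi

theorem nuA_le (a : ℝ) (g : ℝ → ℝ≥0∞) :
    ∫⁻ ζ, g ζ ∂(nuA a) ≤ ∫⁻ ζ in Set.Ioi (0 : ℝ), g ζ * ENNReal.ofReal (ζ ^ a) := by
  refine (lintegral_withDensity_le_lintegral_mul _ (by fun_prop) g).trans_eq ?_
  refine lintegral_congr fun ζ => ?_
  simp [mul_comm]

theorem inner_bound {d : ℕ} (hd : 1 ≤ d) {a C : ℝ} (f : ((Fin d → ℝ) × ℝ) → ℂ)
    (hC : ∀ z ζ t : ℝ, 0 < z → 0 < ζ → t ≠ 0 → ‖SaK a z ζ t‖ ≤ C * |t| ^ (-((a + 1) / 2)))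
    (x : Fin d → ℝ) {z : ℝ} (hz : 0 < z) (s : ℝ) :
    ‖∫ Y, SK d a (x, z) Y s * f Y ∂(ωa d a)‖ₑ ≤
      ∫⁻ ζ, ENNReal.ofReal (C * |s| ^ (-((a + 1) / 2))) * ‖∫ y, Sfree d x y s * f (y, ζ)‖ₑ ∂(nuA a) := by
  by_cases hI : Integrable (fun Y => SK d a (x, z) Y s * f Y) (ωa d a)
  swap
  · rw [integral_undef hI]; simp
  have e : ωa d a = (volume : Measure (Fin d → ℝ)).prod (nuA a) := rfl
  rw [e] at hI ⊢
  rw [integral_prod_symm _ hI]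
  refine (enorm_integral_le_lintegral_enorm _).trans ?_
  refine lintegral_mono_ae ?_
  filter_upwards [nuA_pos a] with ζ hζ
  have : (∫ y, SK d a (x, z) (y, ζ) s * f (y, ζ)) = SaK a z ζ s * ∫ y, Sfree d x y s * f (y, ζ) := by
    rw [← integral_const_mul]
    refine integral_congr_ae (Eventually.of_forall fun y => ?_)
    simp only [SK]; ring
  rw [this, enorm_mul]
  by_cases hs : s = 0
  · subst hs
    simp [sfree_zero hd]
  · refine mul_le_mul_left ?_ _
    rw [← ofReal_norm]
    exact ENNReal.ofReal_le_ofReal (hC z ζ s hz hζ hs)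

set_option maxHeartbeats 1000000 in
theorem TT_main
    (d : ℕ) (hd : 1 ≤ d) (a : ℝ) (ha : 0 ≤ a) (q r : ℝ)
    (hr : 2 ≤ r) (hq : 2 < q)
    (hadm : 2 / q + (d : ℝ) / r = ((d : ℝ) + a + 1) / 2) :
    ∃ C > (0 : ℝ), ∀ F : SchwartzMap (((Fin d → ℝ) × ℝ) × ℝ) ℂ,
      (⨆ (z : ℝ) (_ : 0 < z),
          mixNorm d q r (fun x t =>
            ∫ τ : ℝ, ∫ Y, SK d a (x, z) Y (t - τ) * F (Y, τ) ∂(ωa d a)))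
        ≤ ENNReal.ofReal C *
            ∫⁻ ζ in Set.Ioi (0 : ℝ),
              mixNorm d (q / (q - 1)) (r / (r - 1)) (fun x t => F ((x, ζ), t)) *
                ENNReal.ofReal (ζ ^ a) := by
  obtain ⟨C1, hC1, h1⟩ := SaK_bdd ha
  obtain ⟨C2, hC2, h2⟩ := sfree_Lr d hr
  obtain ⟨C3, hC3, h3⟩ := hls hq
  have hr0 : 0 < r := by linarith
  have hq0 : 0 < q := by linarith
  have hr' : 0 < r / (r - 1) := div_pos hr0 (by linarith)
  have hq' : 0 < q / (q - 1) := div_pos hq0 (by linarith)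
  refine ⟨C1 * C2 * C3, by positivity, fun F => iSup₂_le fun z hz => ?_⟩
  set N : ℝ → ℝ → ℝ≥0∞ := fun ζ τ =>
    (∫⁻ x : Fin d → ℝ, ‖F ((x, ζ), τ)‖ₑ ^ (r / (r - 1))) ^ (1 / (r / (r - 1))) with hN
  have hNm : Measurable (Function.uncurry N) := by
    have h0 : Measurable (fun p : (ℝ × ℝ) × (Fin d → ℝ) => ‖F ((p.2, p.1.1), p.1.2)‖ₑ ^ (r / (r - 1))) := by
      have : Measurable (fun p : (ℝ × ℝ) × (Fin d → ℝ) => F ((p.2, p.1.1), p.1.2)) :=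
        F.continuous.measurable.comp (by fun_prop)
      exact this.enorm.pow_const _
    exact (h0.lintegral_prod_right').pow_const _
  -- step A+B
  have hB : ∀ t : ℝ, (∫⁻ x : Fin d → ℝ,
      ‖∫ τ : ℝ, ∫ Y, SK d a (x, z) Y (t - τ) * F (Y, τ) ∂(ωa d a)‖ₑ ^ r) ^ (1 / r) ≤
      ∫⁻ ζ, ENNReal.ofReal (C1 * C2) * (∫⁻ τ, ENNReal.ofReal (|t - τ| ^ (-(2 / q))) * N ζ τ) ∂(nuA a) := by
    intro t
    set G : (Fin d → ℝ) → ℝ × ℝ → ℝ≥0∞ := fun x p =>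
      ENNReal.ofReal (C1 * |t - p.1| ^ (-((a + 1) / 2))) *
        ‖∫ y, Sfree d x y (t - p.1) * F ((y, p.2), p.1)‖ₑ with hG
    have hJ : Measurable (fun w : (Fin d → ℝ) × (ℝ × ℝ) =>
        ∫ y, Sfree d w.1 y (t - w.2.1) * F ((y, w.2.2), w.2.1)) := by
      have hs : Measurable (fun p : ((Fin d → ℝ) × (ℝ × ℝ)) × (Fin d → ℝ) =>
          Sfree d p.1.1 p.2 (t - p.1.2.1) * F ((p.2, p.1.2.2), p.1.2.1)) := by
        refine Measurable.mul ?_ ?_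
        · exact (measurable_sfree d).comp (f := fun p : ((Fin d → ℝ) × (ℝ × ℝ)) × (Fin d → ℝ) =>
            (p.1.1, p.2, t - p.1.2.1)) (by fun_prop)
        · exact F.continuous.measurable.comp (by fun_prop)
      exact (hs.stronglyMeasurable.integral_prod_right').measurable
    have hGm : Measurable (Function.uncurry G) := by
      have hw : Measurable (fun w : (Fin d → ℝ) × (ℝ × ℝ) =>
          ENNReal.ofReal (C1 * |t - w.2.1| ^ (-((a + 1) / 2)))) := by fun_prop
      have hJ' := hJ.enorm
      have := hw.mul hJ'
      exact this
    have hpt : ∀ x, ‖∫ τ : ℝ, ∫ Y, SK d a (x, z) Y (t - τ) * F (Y, τ) ∂(ωa d a)‖ₑ ≤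
        ∫⁻ p, G x p ∂((volume : Measure ℝ).prod (nuA a)) := by
      intro x
      refine (enorm_integral_le_lintegral_enorm _).trans ?_
      have hgx : Measurable (G x) := hGm.of_uncurry_left
      rw [lintegral_prod _ hgx.aemeasurable]
      refine lintegral_mono fun τ => ?_
      exact inner_bound hd (fun Y => F (Y, τ)) h1 x hz (t - τ)
    have hslice : ∀ p : ℝ × ℝ, (∫⁻ x, G x p ^ r) ^ (1 / r) ≤
        ENNReal.ofReal (C1 * C2) * (ENNReal.ofReal (|t - p.1| ^ (-(2 / q))) * N p.2 p.1) := by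
      intro p
      by_cases ht : t - p.1 = 0
      · have : ∀ x, G x p = 0 := by
          intro x
          simp [hG, ht, sfree_zero hd]
        simp [this, hr0]
      have hpos : 0 < |t - p.1| := abs_pos.2 ht
      have hm : Measurable (fun x => ‖∫ y, Sfree d x y (t - p.1) * F ((y, p.2), p.1)‖ₑ) :=
by
        have h5 := (hJ.comp (measurable_prodMk_right (y := p))).enorm
        exact h5
      obtain ⟨s1, s2, s3⟩ := slice_nice F p.2 p.1
      have hL := h2 (t - p.1) ht _ s1 s2 s3
      calc (∫⁻ x, G x p ^ r) ^ (1 / r)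
          = ENNReal.ofReal (C1 * |t - p.1| ^ (-((a + 1) / 2))) *
            (∫⁻ x, ‖∫ y, Sfree d x y (t - p.1) * F ((y, p.2), p.1)‖ₑ ^ r) ^ (1 / r) := by
            simp only [hG, ENNReal.mul_rpow_of_nonneg _ _ hr0.le]
            rw [lintegral_const_mul _ (hm.pow_const _), ENNReal.mul_rpow_of_nonneg _ _ (by positivity),
              ← ENNReal.rpow_mul, mul_one_div_cancel hr0.ne', ENNReal.rpow_one]
        _ ≤ ENNReal.ofReal (C1 * |t - p.1| ^ (-((a + 1) / 2))) *
            (ENNReal.ofReal (C2 * |t - p.1| ^ (-((d : ℝ) * (1 / 2 - 1 / r)))) * N p.2 p.1) :=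
            mul_le_mul_right hL _
        _ = _ := by
            rw [← mul_assoc, ← mul_assoc, ← ENNReal.ofReal_mul (by positivity),
              ← ENNReal.ofReal_mul (by positivity)]
            congr 2
            have he : -(2 / q) = -((a + 1) / 2) + -((d : ℝ) * (1 / 2 - 1 / r)) := by
              have : (d : ℝ) / r = d * (1 / r) := by ring
              rw [this] at hadm
              linarith
            rw [he, Real.rpow_add hpos]
            ring
    calc _ ≤ (∫⁻ x, (∫⁻ p, G x p ∂((volume : Measure ℝ).prod (nuA a))) ^ r) ^ (1 / r) := by
          refine ENNReal.rpow_le_rpow (lintegral_mono fun x => ?_) (by positivity)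
          exact ENNReal.rpow_le_rpow (hpt x) hr0.le
      _ ≤ ∫⁻ p, (∫⁻ x, G x p ^ r) ^ (1 / r) ∂((volume : Measure ℝ).prod (nuA a)) :=
          minkowski_lint (by linarith) hGm
      _ ≤ ∫⁻ p, ENNReal.ofReal (C1 * C2) * (ENNReal.ofReal (|t - p.1| ^ (-(2 / q))) * N p.2 p.1)
            ∂((volume : Measure ℝ).prod (nuA a)) := lintegral_mono hslice
      _ = _ := by
          have hm2 : Measurable (fun p : ℝ × ℝ => ENNReal.ofReal (|t - p.1| ^ (-(2 / q))) * N p.2 p.1) := by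
            refine Measurable.mul (by fun_prop) ?_
            have h5 := hNm.comp ((measurable_snd (α := ℝ) (β := ℝ)).prodMk measurable_fst)
            exact h5
          rw [lintegral_prod_symm _ (hm2.const_mul _).aemeasurable]
          refine lintegral_congr fun ζ => ?_
          have hm4 : Measurable (fun τ : ℝ => ENNReal.ofReal (|t - τ| ^ (-(2 / q))) * N ζ τ) :=
            Measurable.mul (by fun_prop) hNm.of_uncurry_left
          exact lintegral_const_mul _ hm4
  -- step C
  set H : ℝ → ℝ → ℝ≥0∞ := fun t ζ =>
    ENNReal.ofReal (C1 * C2) * ∫⁻ τ, ENNReal.ofReal (|t - τ| ^ (-(2 / q))) * N ζ τ with hH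
  have hHm0 : Measurable (fun p : ℝ × ℝ => ∫⁻ τ, ENNReal.ofReal (|p.1 - τ| ^ (-(2 / q))) * N p.2 τ) := by
    have : Measurable (fun w : (ℝ × ℝ) × ℝ => ENNReal.ofReal (|w.1.1 - w.2| ^ (-(2 / q))) * N w.1.2 w.2) := by
      refine Measurable.mul (by fun_prop) ?_
      have h6 : Measurable (fun w : (ℝ × ℝ) × ℝ => (w.1.2, w.2)) := by fun_prop
      have h5 := hNm.comp h6
      exact h5
    exact this.lintegral_prod_right'
  have hHm : Measurable (Function.uncurry H) := hHm0.const_mul _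
  have hmix : ∀ ζ, mixNorm d (q / (q - 1)) (r / (r - 1)) (fun x t => F ((x, ζ), t)) =
      (∫⁻ τ, N ζ τ ^ (q / (q - 1))) ^ (1 / (q / (q - 1))) := by
    intro ζ
    unfold mixNorm
    congr 1
    refine lintegral_congr fun t => ?_
    simp only [hN]
    rw [← ENNReal.rpow_mul]
    congr 1
    ring
  calc _ ≤ (∫⁻ t, (∫⁻ ζ, H t ζ ∂(nuA a)) ^ q) ^ (1 / q) := by
        unfold mixNorm
        refine ENNReal.rpow_le_rpow (lintegral_mono fun t => ?_) (by positivity)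
        have := ENNReal.rpow_le_rpow (hB t) hq0.le
        rw [← ENNReal.rpow_mul] at this
        refine le_trans (le_of_eq ?_) this
        rw [one_div_mul_eq_div]
        rfl
    _ ≤ ∫⁻ ζ, (∫⁻ t, H t ζ ^ q) ^ (1 / q) ∂(nuA a) := minkowski_lint (by linarith) hHm
    _ ≤ ∫⁻ ζ, ENNReal.ofReal (C1 * C2 * C3) *
          mixNorm d (q / (q - 1)) (r / (r - 1)) (fun x t => F ((x, ζ), t)) ∂(nuA a) := by
        refine lintegral_mono fun ζ => ?_
        have hm3 : Measurable (fun t => ∫⁻ τ, ENNReal.ofReal (|t - τ| ^ (-(2 / q))) * N ζ τ) :=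
by
          have h5 := hHm0.comp (measurable_prodMk_right (α := ℝ) (y := ζ))
          exact h5
        simp only [hH, ENNReal.mul_rpow_of_nonneg _ _ hq0.le]
        rw [lintegral_const_mul _ (hm3.pow_const _), ENNReal.mul_rpow_of_nonneg _ _ (by positivity),
              ← ENNReal.rpow_mul, mul_one_div_cancel hq0.ne', ENNReal.rpow_one,
              ENNReal.ofReal_mul (by positivity : 0 ≤ C1 * C2), mul_assoc, hmix]
        exact mul_le_mul_right (h3 (N ζ) hNm.of_uncurry_left) _
    _ = ENNReal.ofReal (C1 * C2 * C3) * ∫⁻ ζ,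
          mixNorm d (q / (q - 1)) (r / (r - 1)) (fun x t => F ((x, ζ), t)) ∂(nuA a) :=
        lintegral_const_mul' _ _ ENNReal.ofReal_ne_top
    _ ≤ _ := mul_le_mul_right (nuA_le a _) _


/-- The `𝕋_a^*𝕋_a` estimate for `a ≥ 0`: if `r ≥ 2`, `2 < q < ∞` and
`2/q + d/r = (d+a+1)/2`, then for Schwartz `F`, the function
`W(X,t) = ∫_ℝ ∫ 𝕊_a(X,Y,t-τ) F(Y,τ) dω_a(Y) dτ` satisfies
`sup_{z>0} ‖W(·,z,·)‖_{L^q_t L^r_x} ≤ C ∫₀^∞ ‖F(·,ζ,·)‖_{L^{q'}_t L^{r'}_x} ζ^a dζ`. -/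
theorem TstarT_strichartz_nonneg
    (d : ℕ) (hd : 1 ≤ d) (a : ℝ) (ha : 0 ≤ a) (q r : ℝ)
    (hr : 2 ≤ r) (hq : 2 < q)
    (hadm : 2 / q + (d : ℝ) / r = ((d : ℝ) + a + 1) / 2) :
    ∃ C > (0 : ℝ), ∀ F : SchwartzMap (((Fin d → ℝ) × ℝ) × ℝ) ℂ,
      (⨆ (z : ℝ) (_ : 0 < z),
          mixNorm d q r (fun x t =>
            ∫ τ : ℝ, ∫ Y, SK d a (x, z) Y (t - τ) * F (Y, τ) ∂(ωa d a)))
        ≤ ENNReal.ofReal C *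
            ∫⁻ ζ in Set.Ioi (0 : ℝ),
              mixNorm d (q / (q - 1)) (r / (r - 1)) (fun x t => F ((x, ζ), t)) *
                ENNReal.ofReal (ζ ^ a) := by
  exact TT_main d hd a ha q r hr hq hadm

end
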